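/- Let 0 < α < 1/2. There exists C > 0 depending only on α with the following property: for every T > 0 and every continuous e : [0,T] → ℝ, the function w(t) = ∫_t^T ω_α(s−t) e(s) ds satisfies: the map t ↦ ∫_0^t ω_{1−α}(t−s) w(s) ds is differentiable at almost every t ∈ (0,T), and its derivative D_{0+}^α w satisfies ∫_0^T ((D_{0+}^α w)(t))² dt ≤ C ∫_0^T e(t)² dt. -/

import Mathlib

/-- The Riemann–Liouville kernel `ω_β(t) = t^(β-1) / Γ(β)`. -/
noncomputable def rlKernel (β t : ℝ) : ℝ := t ^ (β - 1) / Real.Gamma β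

open MeasureTheory Filter Topology Set
open scoped ENNReal

/-- The real part of `1 / ((s - u + iε) (s - v - iε))`. -/
noncomputable def cauchyPair (ε u v s : ℝ) : ℝ :=
  ((s - u) * (s - v) + ε ^ 2) / (((s - u) ^ 2 + ε ^ 2) * ((s - v) ^ 2 + ε ^ 2))

lemma integrable_inv_sq_add_sq {ε : ℝ} (hε : 0 < ε) :
    Integrable (fun x : ℝ => 1 / (x ^ 2 + ε ^ 2)) := by
  have h := (integrable_inv_one_add_sq.comp_mul_left' (R := ε⁻¹) (by positivity)).const_mul
    (ε⁻¹ ^ 2)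
  refine h.congr (ae_of_all _ fun x => ?_)
  have : x ^ 2 + ε ^ 2 ≠ 0 := by positivity
  simp only
  field_simp
  ring

lemma abs_cauchyPair_le {ε : ℝ} (hε : 0 < ε) (u v s : ℝ) :
    |cauchyPair ε u v s| ≤ 1 / ((s - u) ^ 2 + ε ^ 2) + 1 / ((s - v) ^ 2 + ε ^ 2) := by
  have h1 : 0 < (s - u) ^ 2 + ε ^ 2 := by positivity
  have h2 : 0 < (s - v) ^ 2 + ε ^ 2 := by positivity
  rw [cauchyPair, abs_div, abs_of_pos (mul_pos h1 h2), div_add_div _ _ h1.ne' h2.ne']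
  gcongr
  rw [abs_le]
  constructor <;> nlinarith [sq_nonneg ((s - u) + (s - v)), sq_nonneg ((s - u) - (s - v)),
    sq_nonneg (s - u), sq_nonneg (s - v)]

lemma measurable_cauchyPair (ε : ℝ) :
    Measurable fun p : (ℝ × ℝ) × ℝ => cauchyPair ε p.1.1 p.1.2 p.2 := by
  unfold cauchyPair
  fun_prop

lemma integrable_cauchyPair {ε : ℝ} (hε : 0 < ε) (u v : ℝ) :
    Integrable (cauchyPair ε u v) := by
  refine Integrable.mono' (((integrable_inv_sq_add_sq hε).comp_sub_right u).add
    ((integrable_inv_sq_add_sq hε).comp_sub_right v)) ?_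
    (ae_of_all _ fun s => abs_cauchyPair_le hε u v s)
  exact ((measurable_cauchyPair ε).comp (measurable_prodMk_left (x := (u, v)))).aestronglyMeasurable

lemma tendsto_log_sq_add_sq_sub {ε : ℝ} (hε : 0 < ε) (u v : ℝ) {l : Filter ℝ}
    (hl : Tendsto (fun s : ℝ => |s|) l atTop) :
    Tendsto (fun s => Real.log ((s - u) ^ 2 + ε ^ 2) - Real.log ((s - v) ^ 2 + ε ^ 2)) l
      (𝓝 0) := by
  have habs : Tendsto (fun s : ℝ => |s - v|) l atTop := by
    refine tendsto_atTop_mono (fun s => ?_) (tendsto_atTop_add_const_right l (-|v|) hl)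
    have := abs_sub_abs_le_abs_sub s v
    linarith
  have hinv : Tendsto (fun s : ℝ => |s - v|⁻¹) l (𝓝 0) := tendsto_inv_atTop_zero.comp habs
  have h1 : Tendsto (fun s => (s - v) / ((s - v) ^ 2 + ε ^ 2)) l (𝓝 0) := by
    refine squeeze_zero_norm (fun s => ?_) hinv
    rcases eq_or_ne (s - v) 0 with h | h
    · simp [h]
    · rw [Real.norm_eq_abs, abs_div, abs_of_pos (by positivity : 0 < (s - v) ^ 2 + ε ^ 2),
        ← sq_abs, div_le_iff₀ (by positivity)]
      have : 0 < |s - v| := abs_pos.2 h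
      field_simp
      nlinarith [sq_nonneg ε]
  have h2 : Tendsto (fun s => 1 / ((s - v) ^ 2 + ε ^ 2)) l (𝓝 0) := by
    refine squeeze_zero_norm' ?_ hinv
    filter_upwards [habs.eventually_ge_atTop 1] with s hs
    rw [Real.norm_eq_abs, abs_of_pos (by positivity), ← sq_abs, one_div]
    gcongr
    nlinarith [sq_nonneg ε]
  have h3 : Tendsto (fun s => 1 + (2 * (v - u)) * ((s - v) / ((s - v) ^ 2 + ε ^ 2))
      + (v - u) ^ 2 * (1 / ((s - v) ^ 2 + ε ^ 2))) l (𝓝 1) := by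
    have := ((h1.const_mul (2 * (v - u))).const_add 1).add (h2.const_mul ((v - u) ^ 2))
    simpa using this
  have h4 := (Real.continuousAt_log one_ne_zero).tendsto.comp h3
  rw [Real.log_one] at h4
  refine h4.congr fun s => ?_
  have e1 : (s - u) ^ 2 + ε ^ 2 ≠ 0 := by positivity
  have e2 : (s - v) ^ 2 + ε ^ 2 ≠ 0 := by positivity
  rw [← Real.log_div e1 e2]
  simp only [Function.comp]
  congr 1
  field_simp
  ring

lemma integral_cauchyPair {ε : ℝ} (hε : 0 < ε) (u v : ℝ) :
    ∫ s, cauchyPair ε u v s = 4 * Real.pi * ε / ((u - v) ^ 2 + 4 * ε ^ 2) := by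
  set M : ℝ := (u - v) ^ 2 + 4 * ε ^ 2 with hM
  have hM0 : 0 < M := by positivity
  have hderiv : ∀ s, HasDerivAt (fun s => (2 * ε / M) * (Real.arctan ((s - u) / ε) +
      Real.arctan ((s - v) / ε)) + ((u - v) / (2 * M)) * (Real.log ((s - u) ^ 2 + ε ^ 2) -
      Real.log ((s - v) ^ 2 + ε ^ 2))) (cauchyPair ε u v s) s := by
    intro s
    have e1 : (s - u) ^ 2 + ε ^ 2 ≠ 0 := by positivity
    have e2 : (s - v) ^ 2 + ε ^ 2 ≠ 0 := by positivity
    have d : ∀ a : ℝ, HasDerivAt (fun s : ℝ => s - a) 1 s := fun a =>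
      (hasDerivAt_id s).sub_const a
    have hl : ∀ a : ℝ, (s - a) ^ 2 + ε ^ 2 ≠ 0 → HasDerivAt
        (fun s : ℝ => Real.log ((s - a) ^ 2 + ε ^ 2)) _ s := fun a ha =>
      (((d a).pow 2).add_const (ε ^ 2)).log ha
    refine HasDerivAt.congr_deriv
      (((((d u).div_const ε).arctan.add ((d v).div_const ε).arctan).const_mul
      (2 * ε / M)).add (((hl u e1).sub (hl v e2)).const_mul ((u - v) / (2 * M)))) ?_
    have e3 : 1 + ((s - u) / ε) ^ 2 = ((s - u) ^ 2 + ε ^ 2) / ε ^ 2 := by field_simp; ring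
    have e4 : 1 + ((s - v) / ε) ^ 2 = ((s - v) ^ 2 + ε ^ 2) / ε ^ 2 := by field_simp; ring
    simp only [Pi.pow_apply]
    rw [e3, e4, cauchyPair]
    field_simp
    simp only [hM]
    ring
  have harctan : ∀ (a : ℝ), Tendsto (fun s : ℝ => Real.arctan ((s - a) / ε)) atTop
      (𝓝 (Real.pi / 2)) := fun a =>
    (Real.tendsto_arctan_atTop.mono_right nhdsWithin_le_nhds).comp
      ((tendsto_atTop_add_const_right _ (-a) tendsto_id).atTop_div_const hε)
  have harctan' : ∀ (a : ℝ), Tendsto (fun s : ℝ => Real.arctan ((s - a) / ε)) atBot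
      (𝓝 (-(Real.pi / 2))) := fun a =>
    (Real.tendsto_arctan_atBot.mono_right nhdsWithin_le_nhds).comp
      ((tendsto_atBot_add_const_right _ (-a) tendsto_id).atBot_div_const hε)
  rw [integral_of_hasDerivAt_of_tendsto hderiv (integrable_cauchyPair hε u v)
    ((((harctan' u).add (harctan' v)).const_mul _).add
      ((tendsto_log_sq_add_sq_sub hε u v tendsto_abs_atBot_atTop).const_mul _))
    ((((harctan u).add (harctan v)).const_mul _).add
      ((tendsto_log_sq_add_sq_sub hε u v tendsto_abs_atTop_atTop).const_mul _))]
  field_simp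
  ring

lemma integral_one_div_sub_sq_add_sq {ε : ℝ} (hε : 0 < ε) (u : ℝ) :
    ∫ s, 1 / ((s - u) ^ 2 + ε ^ 2) = Real.pi / ε := by
  have h := integral_cauchyPair hε u u
  have h' : ∀ s, cauchyPair ε u u s = 1 / ((s - u) ^ 2 + ε ^ 2) := fun s => by
    have e1 : (s - u) ^ 2 + ε ^ 2 ≠ 0 := by positivity
    rw [cauchyPair]
    field_simp
  simp only [h'] at h
  rw [h]
  field_simp
  ring

/-- The Hilbert transform regularised at scale `ε`, up to the factor `π`. -/
noncomputable def hilbertReg (ε : ℝ) (f : ℝ → ℝ) (s : ℝ) : ℝ :=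
  ∫ u, (s - u) / ((s - u) ^ 2 + ε ^ 2) * f u

lemma abs_div_sq_add_sq_le {ε : ℝ} (hε : 0 < ε) (x : ℝ) : |x / (x ^ 2 + ε ^ 2)| ≤ 1 / ε := by
  have h1 : 0 < x ^ 2 + ε ^ 2 := by positivity
  rw [abs_div, abs_of_pos h1, div_le_div_iff₀ h1 hε, ← sq_abs]
  nlinarith [sq_nonneg (|x| - ε), abs_nonneg x]

lemma integrable_hilbertReg_kernel_mul {ε : ℝ} (hε : 0 < ε) {f : ℝ → ℝ} (hf : Integrable f)
    (s : ℝ) : Integrable fun u => (s - u) / ((s - u) ^ 2 + ε ^ 2) * f u :=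
  hf.bdd_mul (c := 1 / ε) (Measurable.aestronglyMeasurable (by fun_prop))
    (ae_of_all _ fun u => abs_div_sq_add_sq_le hε (s - u))

lemma integrable_poisson_kernel_mul {ε : ℝ} (hε : 0 < ε) {f : ℝ → ℝ} (hf : Integrable f)
    (s : ℝ) : Integrable fun u => ε / ((s - u) ^ 2 + ε ^ 2) * f u := by
  refine hf.bdd_mul (c := 1 / ε) (Measurable.aestronglyMeasurable (by fun_prop))
    (ae_of_all _ fun u => ?_)
  have h1 : 0 < (s - u) ^ 2 + ε ^ 2 := by positivity
  rw [Real.norm_eq_abs, abs_of_pos (by positivity), div_le_div_iff₀ h1 hε]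
  nlinarith [sq_nonneg (s - u)]

lemma hilbertReg_sq_add_sq {ε : ℝ} (hε : 0 < ε) {f : ℝ → ℝ} (hf : Integrable f) (s : ℝ) :
    hilbertReg ε f s ^ 2 + (∫ u, ε / ((s - u) ^ 2 + ε ^ 2) * f u) ^ 2 =
      ∫ p : ℝ × ℝ, f p.1 * f p.2 * cauchyPair ε p.1 p.2 s := by
  rw [hilbertReg, sq (∫ u, _), sq (∫ u, _), ← integral_prod_mul, ← integral_prod_mul, ← integral_add
    ((integrable_hilbertReg_kernel_mul hε hf s).mul_prod (integrable_hilbertReg_kernel_mul hε hf s))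
    ((integrable_poisson_kernel_mul hε hf s).mul_prod (integrable_poisson_kernel_mul hε hf s))]
  refine integral_congr_ae (ae_of_all _ fun p => ?_)
  have h1 : (s - p.1) ^ 2 + ε ^ 2 ≠ 0 := by positivity
  have h2 : (s - p.2) ^ 2 + ε ^ 2 ≠ 0 := by positivity
  simp only [cauchyPair]
  field_simp

lemma integrable_mul_mul_cauchyPair {ε : ℝ} (hε : 0 < ε) {f : ℝ → ℝ} (hf : Integrable f) :
    Integrable (fun q : (ℝ × ℝ) × ℝ => f q.1.1 * f q.1.2 * cauchyPair ε q.1.1 q.1.2 q.2)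
      ((volume.prod volume).prod volume) := by
  have hff : Integrable (fun p : ℝ × ℝ => f p.1 * f p.2) (volume.prod volume) := hf.mul_prod hf
  have hm : AEStronglyMeasurable
      (fun q : (ℝ × ℝ) × ℝ => f q.1.1 * f q.1.2 * cauchyPair ε q.1.1 q.1.2 q.2)
      ((volume.prod volume).prod volume) :=
    (hff.aestronglyMeasurable.comp_fst).mul (measurable_cauchyPair ε).aestronglyMeasurable
  refine (integrable_prod_iff hm).2 ⟨ae_of_all _ fun p =>
    (integrable_cauchyPair hε p.1 p.2).const_mul (f p.1 * f p.2), ?_⟩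
  refine Integrable.mono' (hff.norm.mul_const (2 * Real.pi / ε))
    hm.norm.integral_prod_right' (ae_of_all _ fun p => ?_)
  rw [Real.norm_of_nonneg (integral_nonneg fun s => norm_nonneg _)]
  simp only [norm_mul, integral_const_mul]
  gcongr
  calc ∫ s, ‖cauchyPair ε p.1 p.2 s‖
      ≤ ∫ s, (1 / ((s - p.1) ^ 2 + ε ^ 2) + 1 / ((s - p.2) ^ 2 + ε ^ 2)) :=
        integral_mono (integrable_cauchyPair hε _ _).norm
          (((integrable_inv_sq_add_sq hε).comp_sub_right p.1).add
            ((integrable_inv_sq_add_sq hε).comp_sub_right p.2))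
          fun s => abs_cauchyPair_le hε _ _ _
    _ = 2 * Real.pi / ε := by
        rw [integral_add ((integrable_inv_sq_add_sq hε).comp_sub_right p.1)
            ((integrable_inv_sq_add_sq hε).comp_sub_right p.2),
          integral_one_div_sub_sq_add_sq hε, integral_one_div_sub_sq_add_sq hε]
        ring

lemma integrable_mul_poisson {ε : ℝ} (hε : 0 < ε) {g : ℝ → ℝ} (hg : Integrable g) :
    Integrable (fun p : ℝ × ℝ => g p.1 * (1 / ((p.2 - p.1) ^ 2 + ε ^ 2)))
      (volume.prod volume) := by
  have hm : AEStronglyMeasurable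
      (fun p : ℝ × ℝ => g p.1 * (1 / ((p.2 - p.1) ^ 2 + ε ^ 2))) (volume.prod volume) :=
    (hg.aestronglyMeasurable.comp_fst).mul (Measurable.aestronglyMeasurable (by fun_prop))
  refine (integrable_prod_iff hm).2 ⟨ae_of_all _ fun u =>
    ((integrable_inv_sq_add_sq hε).comp_sub_right u).const_mul (g u), ?_⟩
  refine (hg.norm.mul_const (Real.pi / ε)).congr (ae_of_all _ fun u => ?_)
  simp only [norm_mul, integral_const_mul]
  rw [← integral_one_div_sub_sq_add_sq hε u]
  congr 2
  funext s
  rw [Real.norm_of_nonneg (by positivity)]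

lemma integral_mul_poisson {ε : ℝ} (hε : 0 < ε) {g : ℝ → ℝ} (hg : Integrable g) :
    ∫ p : ℝ × ℝ, g p.1 * (1 / ((p.2 - p.1) ^ 2 + ε ^ 2)) = Real.pi / ε * ∫ u, g u := by
  rw [Measure.volume_eq_prod, integral_prod _ (integrable_mul_poisson hε hg)]
  simp only [integral_const_mul, integral_one_div_sub_sq_add_sq hε, integral_mul_const]
  ring

lemma integral_mul_mul_poisson_le {ε : ℝ} (hε : 0 < ε) {f : ℝ → ℝ}
    (hf2 : Integrable fun u => f u ^ 2) :
    ∫ p : ℝ × ℝ, f p.1 * f p.2 * (1 / ((p.1 - p.2) ^ 2 + ε ^ 2)) ≤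
      Real.pi / ε * ∫ u, f u ^ 2 := by
  have h1 : Integrable (fun p : ℝ × ℝ => f p.1 ^ 2 * (1 / ((p.2 - p.1) ^ 2 + ε ^ 2))) :=
    integrable_mul_poisson hε hf2
  have h2 : Integrable (fun p : ℝ × ℝ => f p.2 ^ 2 * (1 / ((p.1 - p.2) ^ 2 + ε ^ 2))) :=
    h1.swap
  have e2 : ∫ p : ℝ × ℝ, f p.2 ^ 2 * (1 / ((p.1 - p.2) ^ 2 + ε ^ 2)) =
      Real.pi / ε * ∫ u, f u ^ 2 := by
    rw [← integral_mul_poisson hε hf2, Measure.volume_eq_prod]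
    exact integral_prod_swap (fun p : ℝ × ℝ => f p.1 ^ 2 * (1 / ((p.2 - p.1) ^ 2 + ε ^ 2)))
  have e : Real.pi / ε * ∫ u, f u ^ 2 = ∫ p : ℝ × ℝ,
      (2⁻¹ * (f p.1 ^ 2 * (1 / ((p.2 - p.1) ^ 2 + ε ^ 2))) +
        2⁻¹ * (f p.2 ^ 2 * (1 / ((p.1 - p.2) ^ 2 + ε ^ 2)))) := by
    rw [integral_add (h1.const_mul _) (h2.const_mul _), integral_const_mul, integral_const_mul,
      integral_mul_poisson hε hf2, e2]
    ring
  rw [e]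
  by_cases hi : Integrable fun p : ℝ × ℝ => f p.1 * f p.2 * (1 / ((p.1 - p.2) ^ 2 + ε ^ 2))
  · refine integral_mono hi ((h1.const_mul _).add (h2.const_mul _)) fun p => ?_
    have h3 : 0 < 1 / ((p.1 - p.2) ^ 2 + ε ^ 2) := by positivity
    simp only
    rw [← sub_sq_comm p.1 p.2]
    nlinarith [mul_nonneg (sq_nonneg (f p.1 - f p.2)) h3.le]
  · rw [integral_undef hi]
    positivity

lemma lintegral_hilbertReg_sq_le {ε : ℝ} (hε : 0 < ε) {f : ℝ → ℝ} (hf : Integrable f)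
    (hf2 : Integrable fun u => f u ^ 2) :
    ∫⁻ s, ENNReal.ofReal (hilbertReg ε f s ^ 2) ≤
      ENNReal.ofReal (2 * Real.pi ^ 2 * ∫ u, f u ^ 2) := by
  have hprod := (integrable_mul_mul_cauchyPair hε hf).integral_prod_right
  calc ∫⁻ s, ENNReal.ofReal (hilbertReg ε f s ^ 2)
      ≤ ∫⁻ s, ENNReal.ofReal (∫ p : ℝ × ℝ, f p.1 * f p.2 * cauchyPair ε p.1 p.2 s) := by
        refine lintegral_mono fun s => ENNReal.ofReal_le_ofReal ?_
        rw [← hilbertReg_sq_add_sq hε hf]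
        exact le_add_of_nonneg_right (sq_nonneg _)
    _ = ENNReal.ofReal (∫ s, ∫ p : ℝ × ℝ, f p.1 * f p.2 * cauchyPair ε p.1 p.2 s) := by
        refine (ofReal_integral_eq_lintegral_ofReal hprod (ae_of_all _ fun s => ?_)).symm
        change 0 ≤ ∫ p : ℝ × ℝ, f p.1 * f p.2 * cauchyPair ε p.1 p.2 s
        rw [← hilbertReg_sq_add_sq hε hf]
        positivity
    _ ≤ _ := by
        refine ENNReal.ofReal_le_ofReal ?_
        rw [Measure.volume_eq_prod, ← integral_integral_swap (f := fun (p : ℝ × ℝ) s =>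
          f p.1 * f p.2 * cauchyPair ε p.1 p.2 s) (integrable_mul_mul_cauchyPair hε hf)]
        simp only [integral_const_mul, integral_cauchyPair hε]
        have h := integral_mul_mul_poisson_le (ε := 2 * ε) (by positivity) hf2
        calc _ = 4 * Real.pi * ε * ∫ p : ℝ × ℝ,
              f p.1 * f p.2 * (1 / ((p.1 - p.2) ^ 2 + (2 * ε) ^ 2)) := by
              rw [← integral_const_mul]
              congr 1
              funext p
              ring
          _ ≤ 4 * Real.pi * ε * (Real.pi / (2 * ε) * ∫ u, f u ^ 2) := by gcongr
          _ = _ := by field_simp; ring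

lemma sq_lintegral_mul_le {α : Type*} [MeasurableSpace α] {μ : Measure α} {f g : α → ℝ≥0∞}
    (hf : AEMeasurable f μ) (hg : AEMeasurable g μ) :
    (∫⁻ a, f a * g a ∂μ) ^ 2 ≤ (∫⁻ a, f a ^ 2 ∂μ) * ∫⁻ a, g a ^ 2 ∂μ := by
  have h := ENNReal.lintegral_mul_le_Lp_mul_Lq μ Real.HolderConjugate.two_two hf hg
  have h2 := pow_le_pow_left₀ (zero_le) h 2
  simp only [Pi.mul_apply, ENNReal.rpow_two] at h2
  refine h2.trans_eq ?_
  rw [mul_pow, ← ENNReal.rpow_two, ← ENNReal.rpow_two, ← ENNReal.rpow_mul, ← ENNReal.rpow_mul]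
  norm_num

lemma ofReal_sq_eq_enorm_sq (x : ℝ) : ENNReal.ofReal (x ^ 2) = ‖x‖ₑ ^ 2 := by
  rw [← sq_abs, ENNReal.ofReal_pow (abs_nonneg x), Real.enorm_eq_ofReal_abs]

lemma eVariationOn_le_lintegral {R H : ℝ → ℝ}
    (hRH : ∀ a b, a ≤ b → R b - R a = ∫ t in a..b, H t) (a b : ℝ) :
    eVariationOn R (Icc a b) ≤ ∫⁻ t in Icc a b, ‖H t‖ₑ := by
  refine iSup_le fun ⟨n, u, hu, hus⟩ => ?_
  have hd : Pairwise (Function.onFun Disjoint fun i => Ioc (u i) (u (i + 1))) :=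
    hu.pairwise_disjoint_on_Ioc_succ
  calc ∑ i ∈ Finset.range n, edist (R (u (i + 1))) (R (u i))
      ≤ ∑ i ∈ Finset.range n, ∫⁻ t in Ioc (u i) (u (i + 1)), ‖H t‖ₑ := by
        refine Finset.sum_le_sum fun i _ => ?_
        rw [edist_eq_enorm_sub, hRH _ _ (hu (Nat.le_succ i)),
          intervalIntegral.integral_of_le (hu (Nat.le_succ i))]
        exact enorm_integral_le_lintegral_enorm _
    _ = ∫⁻ t in ⋃ i ∈ Finset.range n, Ioc (u i) (u (i + 1)), ‖H t‖ₑ :=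
        (lintegral_biUnion_finset (hd.set_pairwise _) (fun _ _ => measurableSet_Ioc) _).symm
    _ ≤ _ := by
        refine lintegral_mono_set (iUnion₂_subset fun i _ t ht => ?_)
        exact ⟨(hus i).1.trans ht.1.le, ht.2.trans (hus (i + 1)).2⟩

lemma lintegral_Icc_enorm_le (H : ℝ → ℝ) (a b : ℝ) :
    ∫⁻ t in Icc a b, ‖H t‖ₑ ≤ ENNReal.ofReal (b - a) + ∫⁻ t, ‖H t‖ₑ ^ 2 := by
  calc ∫⁻ t in Icc a b, ‖H t‖ₑ ≤ ∫⁻ t in Icc a b, (1 + ‖H t‖ₑ ^ 2) := by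
        refine lintegral_mono fun t => ?_
        rcases le_total ‖H t‖ₑ 1 with h | h
        · exact h.trans le_self_add
        · exact (le_self_pow₀ h two_ne_zero).trans le_add_self
    _ = ENNReal.ofReal (b - a) + ∫⁻ t in Icc a b, ‖H t‖ₑ ^ 2 := by
        rw [lintegral_add_left measurable_const]
        simp
    _ ≤ _ := by exact add_le_add le_rfl (setLIntegral_le_lintegral _ _)

lemma lintegral_slope_sq_le {R H : ℝ → ℝ} (hH : Measurable H)
    (hRH : ∀ a b, a ≤ b → R b - R a = ∫ t in a..b, H t) {h : ℝ} (hh : 0 < h) :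
    ∫⁻ t, ‖h⁻¹ * (R (t + h) - R t)‖ₑ ^ 2 ≤ ∫⁻ t, ‖H t‖ₑ ^ 2 := by
  have hm : Measurable (Function.uncurry fun t σ => ‖H (t + σ)‖ₑ ^ 2) := by
    unfold Function.uncurry
    fun_prop
  have hpt : ∀ t, ‖h⁻¹ * (R (t + h) - R t)‖ₑ ^ 2 ≤
      ‖h⁻¹‖ₑ * ∫⁻ σ in Ioc 0 h, ‖H (t + σ)‖ₑ ^ 2 := by
    intro t
    have e : R (t + h) - R t = ∫ σ in (0:ℝ)..h, H (t + σ) := by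
      rw [hRH _ _ (by linarith), intervalIntegral.integral_comp_add_left (fun x => H x) t]
      simp
    have hcs := sq_lintegral_mul_le (μ := volume.restrict (Ioc 0 h)) (f := fun _ => 1)
      (g := fun σ => ‖H (t + σ)‖ₑ) aemeasurable_const (by fun_prop)
    simp only [one_mul, one_pow, lintegral_const, Measure.restrict_apply, MeasurableSet.univ,
      univ_inter, Real.volume_Ioc, sub_zero] at hcs
    rw [enorm_mul, mul_pow, e, intervalIntegral.integral_of_le hh.le]
    have hhe : ‖h⁻¹‖ₑ * ENNReal.ofReal h = 1 := by
      rw [Real.enorm_eq_ofReal (by positivity), ← ENNReal.ofReal_mul (by positivity),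
        inv_mul_cancel₀ hh.ne', ENNReal.ofReal_one]
    calc ‖h⁻¹‖ₑ ^ 2 * ‖∫ σ in Ioc 0 h, H (t + σ)‖ₑ ^ 2
        ≤ ‖h⁻¹‖ₑ ^ 2 * (ENNReal.ofReal h * ∫⁻ σ in Ioc 0 h, ‖H (t + σ)‖ₑ ^ 2) := by
          gcongr
          exact (pow_le_pow_left₀ zero_le (enorm_integral_le_lintegral_enorm _) 2).trans hcs
      _ = (‖h⁻¹‖ₑ * ENNReal.ofReal h) * (‖h⁻¹‖ₑ * ∫⁻ σ in Ioc 0 h, ‖H (t + σ)‖ₑ ^ 2) := by ring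
      _ = _ := by rw [hhe, one_mul]
  calc ∫⁻ t, ‖h⁻¹ * (R (t + h) - R t)‖ₑ ^ 2
      ≤ ∫⁻ t, ‖h⁻¹‖ₑ * ∫⁻ σ in Ioc 0 h, ‖H (t + σ)‖ₑ ^ 2 := lintegral_mono hpt
    _ = ‖h⁻¹‖ₑ * ∫⁻ σ in Ioc 0 h, ∫⁻ t, ‖H (t + σ)‖ₑ ^ 2 := by
        rw [lintegral_const_mul' _ _ enorm_ne_top, lintegral_lintegral_swap hm.aemeasurable]
    _ = ‖h⁻¹‖ₑ * ∫⁻ σ in Ioc 0 h, ∫⁻ t, ‖H t‖ₑ ^ 2 := by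
        congr 2
        funext σ
        exact lintegral_add_right_eq_self (fun t => ‖H t‖ₑ ^ 2) σ
    _ = _ := by
        rw [lintegral_const, Measure.restrict_apply MeasurableSet.univ, univ_inter,
          Real.volume_Ioc, sub_zero, Real.enorm_eq_ofReal (by positivity), mul_comm, mul_assoc,
          ← ENNReal.ofReal_mul (by positivity), mul_inv_cancel₀ hh.ne', ENNReal.ofReal_one, mul_one]

section Limit

variable {R : ℝ → ℝ} {Rn H : ℕ → ℝ → ℝ} {K : ℝ≥0∞}

lemma ae_differentiableAt_of_tendsto (hK : K ≠ ∞)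
    (hRH : ∀ n a b, a ≤ b → Rn n b - Rn n a = ∫ t in a..b, H n t)
    (hHK : ∀ n, ∫⁻ t, ‖H n t‖ₑ ^ 2 ≤ K) (hR : ∀ t, Tendsto (fun n => Rn n t) atTop (𝓝 (R t))) :
    ∀ᵐ t, DifferentiableAt ℝ R t := by
  refine LocallyBoundedVariationOn.ae_differentiableAt fun a b _ _ => ?_
  rw [univ_inter]
  have hbd : ∀ n, eVariationOn (Rn n) (Icc a b) ≤ ENNReal.ofReal (b - a) + K := fun n =>
    (eVariationOn_le_lintegral (hRH n) a b).trans
      ((lintegral_Icc_enorm_le _ a b).trans (by gcongr; exact hHK n))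
  have : eVariationOn R (Icc a b) ≤ ENNReal.ofReal (b - a) + K := by
    by_contra! hlt
    obtain ⟨n, hn⟩ := (eVariationOn.lowerSemicontinuous_aux (fun t _ => hR t) hlt).exists
    exact (hbd n).not_gt hn
  exact ne_top_of_le_ne_top (by finiteness) this

lemma lintegral_deriv_sq_le_of_tendsto (hK : K ≠ ∞) (hH : ∀ n, Measurable (H n))
    (hRm : ∀ n, Measurable (Rn n))
    (hRH : ∀ n a b, a ≤ b → Rn n b - Rn n a = ∫ t in a..b, H n t)
    (hHK : ∀ n, ∫⁻ t, ‖H n t‖ₑ ^ 2 ≤ K) (hR : ∀ t, Tendsto (fun n => Rn n t) atTop (𝓝 (R t))) :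
    ∫⁻ t, ‖deriv R t‖ₑ ^ 2 ≤ K := by
  have hRmeas : Measurable R := measurable_of_tendsto_metrizable hRm (tendsto_pi_nhds.2 hR)
  have hslope : ∀ h : ℝ, 0 < h → ∫⁻ t, ‖h⁻¹ * (R (t + h) - R t)‖ₑ ^ 2 ≤ K := by
    intro h hh
    have hlim : ∀ t, Tendsto (fun n => ‖h⁻¹ * (Rn n (t + h) - Rn n t)‖ₑ ^ 2) atTop
        (𝓝 (‖h⁻¹ * (R (t + h) - R t)‖ₑ ^ 2)) := fun t =>
      ENNReal.Tendsto.pow ((((hR (t + h)).sub (hR t)).const_mul _).enorm)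
    calc ∫⁻ t, ‖h⁻¹ * (R (t + h) - R t)‖ₑ ^ 2
        = ∫⁻ t, liminf (fun n => ‖h⁻¹ * (Rn n (t + h) - Rn n t)‖ₑ ^ 2) atTop := by
          simp only [(hlim _).liminf_eq]
      _ ≤ liminf (fun n => ∫⁻ t, ‖h⁻¹ * (Rn n (t + h) - Rn n t)‖ₑ ^ 2) atTop :=
          lintegral_liminf_le fun n => by have := hRm n; fun_prop
      _ ≤ K := by
          refine liminf_le_of_le (by isBoundedDefault) fun b hb => ?_
          obtain ⟨n, hn⟩ := hb.exists
          exact hn.trans ((lintegral_slope_sq_le (hH n) (hRH n) hh).trans (hHK n))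
  have hpos : ∀ n : ℕ, (0 : ℝ) < 1 / ((n : ℝ) + 1) := fun n => by positivity
  have hlim : ∀ᵐ t, Tendsto (fun n : ℕ => ‖(1 / ((n : ℝ) + 1))⁻¹ *
      (R (t + 1 / ((n : ℝ) + 1)) - R t)‖ₑ ^ 2) atTop (𝓝 (‖deriv R t‖ₑ ^ 2)) := by
    filter_upwards [ae_differentiableAt_of_tendsto hK hRH hHK hR] with t ht
    have h1 := ht.hasDerivAt.tendsto_slope_zero_right
    have h2 : Tendsto (fun n : ℕ => 1 / ((n : ℝ) + 1)) atTop (𝓝[>] 0) :=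
      tendsto_nhdsWithin_iff.2 ⟨tendsto_one_div_add_atTop_nhds_zero_nat,
        Eventually.of_forall fun n => hpos n⟩
    exact ENNReal.Tendsto.pow ((h1.comp h2).enorm)
  calc ∫⁻ t, ‖deriv R t‖ₑ ^ 2
      = ∫⁻ t, liminf (fun n : ℕ => ‖(1 / ((n : ℝ) + 1))⁻¹ *
          (R (t + 1 / ((n : ℝ) + 1)) - R t)‖ₑ ^ 2) atTop :=
        lintegral_congr_ae (hlim.mono fun t ht => ht.liminf_eq.symm)
    _ ≤ liminf (fun n : ℕ => ∫⁻ t, ‖(1 / ((n : ℝ) + 1))⁻¹ *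
          (R (t + 1 / ((n : ℝ) + 1)) - R t)‖ₑ ^ 2) atTop :=
        lintegral_liminf_le fun n => by fun_prop
    _ ≤ K := by
        refine liminf_le_of_le (by isBoundedDefault) fun b hb => ?_
        obtain ⟨n, hn⟩ := hb.exists
        exact hn.trans (hslope _ (hpos n))

end Limit

section LogPotential

variable {f : ℝ → ℝ} {B T : ℝ}

lemma integrable_mul_of_bounded_of_support {g : ℝ → ℝ} (hg : IntegrableOn g (Ioc 0 T))
    (hfm : Measurable f) (hfb : ∀ u, |f u| ≤ B) (hfs : ∀ u, u ∉ Ioc 0 T → f u = 0) :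
    Integrable fun u => g u * f u := by
  rw [← integrableOn_iff_integrable_of_support_subset (s := Ioc 0 T)]
  · exact Integrable.mul_bdd (c := B) hg hfm.aestronglyMeasurable (ae_of_all _ hfb)
  · intro u hu
    by_contra h
    exact hu (by simp [hfs u h])

lemma integrable_of_bounded_of_support
    (hfm : Measurable f) (hfb : ∀ u, |f u| ≤ B) (hfs : ∀ u, u ∉ Ioc 0 T → f u = 0) :
    Integrable f := by
  simpa using integrable_mul_of_bounded_of_support (g := fun _ => 1) (T := T)
    (integrableOn_const (by simp)) hfm hfb hfs

lemma integrable_sq_of_bounded_of_support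
    (hfm : Measurable f) (hfb : ∀ u, |f u| ≤ B) (hfs : ∀ u, u ∉ Ioc 0 T → f u = 0) :
    Integrable fun u => f u ^ 2 := by
  simpa [sq] using integrable_mul_of_bounded_of_support (g := f) (T := T)
    (integrable_of_bounded_of_support hfm hfb hfs).integrableOn hfm hfb hfs

lemma integrableOn_log_sub (t T : ℝ) : IntegrableOn (fun u => Real.log (t - u)) (Ioc 0 T) := by
  rcases le_or_gt T 0 with h | h
  · simp [Ioc_eq_empty_of_le h]
  · rw [← intervalIntegrable_iff_integrableOn_Ioc_of_le h.le]
    simpa using (intervalIntegral.intervalIntegrable_log' (a := t) (b := t - T)).comp_sub_left t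

lemma integrable_log_sq_add_sq_mul {ε : ℝ} (hε : 0 < ε)
    (hfm : Measurable f) (hfb : ∀ u, |f u| ≤ B) (hfs : ∀ u, u ∉ Ioc 0 T → f u = 0) (t : ℝ) :
    Integrable fun u => 2⁻¹ * Real.log ((t - u) ^ 2 + ε ^ 2) * f u := by
  refine integrable_mul_of_bounded_of_support ?_ hfm hfb hfs
  refine (Continuous.integrableOn_Icc ?_).mono_set Ioc_subset_Icc_self
  exact continuous_const.mul (Continuous.log (by fun_prop) fun u => by positivity)

lemma hasDerivAt_log_sq_add_sq {ε : ℝ} (hε : 0 < ε) (u t : ℝ) :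
    HasDerivAt (fun t => 2⁻¹ * Real.log ((t - u) ^ 2 + ε ^ 2))
      ((t - u) / ((t - u) ^ 2 + ε ^ 2)) t := by
  have e1 : (t - u) ^ 2 + ε ^ 2 ≠ 0 := by positivity
  have h := ((((hasDerivAt_id t).sub_const u).pow 2).add_const (ε ^ 2)).log e1
  refine (h.const_mul 2⁻¹).congr_deriv ?_
  simp
  field_simp

lemma measurable_hilbertReg (ε : ℝ) (hfm : Measurable f) : Measurable (hilbertReg ε f) := by
  have : StronglyMeasurable (Function.uncurry fun s u =>
      (s - u) / ((s - u) ^ 2 + ε ^ 2) * f u) := by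
    refine Measurable.stronglyMeasurable ?_
    unfold Function.uncurry
    fun_prop
  exact this.integral_prod_right.measurable

lemma log_potential_sub {ε : ℝ} (hε : 0 < ε)
    (hfm : Measurable f) (hfb : ∀ u, |f u| ≤ B) (hfs : ∀ u, u ∉ Ioc 0 T → f u = 0)
    {a b : ℝ} (hab : a ≤ b) :
    (∫ u, 2⁻¹ * Real.log ((b - u) ^ 2 + ε ^ 2) * f u) -
      (∫ u, 2⁻¹ * Real.log ((a - u) ^ 2 + ε ^ 2) * f u) = ∫ t in a..b, hilbertReg ε f t := by
  rw [← integral_sub (integrable_log_sq_add_sq_mul hε hfm hfb hfs b)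
    (integrable_log_sq_add_sq_mul hε hfm hfb hfs a), intervalIntegral.integral_of_le hab]
  have hi : Integrable (Function.uncurry fun t u => (t - u) / ((t - u) ^ 2 + ε ^ 2) * f u)
      ((volume.restrict (Ioc a b)).prod volume) := by
    have h1 : Integrable (fun p : ℝ × ℝ => (1 : ℝ) * f p.2)
        ((volume.restrict (Ioc a b)).prod volume) :=
      (integrable_const (1 : ℝ)).mul_prod (integrable_of_bounded_of_support hfm hfb hfs)
    simp only [one_mul] at h1
    refine h1.bdd_mul (c := 1 / ε) (f := fun p : ℝ × ℝ =>
      (p.1 - p.2) / ((p.1 - p.2) ^ 2 + ε ^ 2)) (Measurable.aestronglyMeasurable (by fun_prop))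
      (ae_of_all _ fun p => abs_div_sq_add_sq_le hε _)
  unfold hilbertReg
  rw [integral_integral_swap hi]
  refine integral_congr_ae (ae_of_all _ fun u => ?_)
  simp only
  rw [integral_mul_const, ← sub_mul, ← intervalIntegral.integral_of_le hab,
    intervalIntegral.integral_eq_sub_of_hasDerivAt (fun t _ => hasDerivAt_log_sq_add_sq hε u t)]
  refine Continuous.intervalIntegrable ?_ _ _
  exact Continuous.div (by fun_prop) (by fun_prop) fun t => by positivity

lemma tendsto_log_potential
    (hfm : Measurable f) (hfb : ∀ u, |f u| ≤ B) (hfs : ∀ u, u ∉ Ioc 0 T → f u = 0) (t : ℝ) :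
    Tendsto (fun n : ℕ => ∫ u, 2⁻¹ * Real.log ((t - u) ^ 2 + (1 / ((n : ℝ) + 1)) ^ 2) * f u)
      atTop (𝓝 (∫ u, Real.log (t - u) * f u)) := by
  have hpos : ∀ n : ℕ, (0 : ℝ) < 1 / ((n : ℝ) + 1) := fun n => by positivity
  have hne : ∀ᵐ u : ℝ, u ≠ t := by simp [ae_iff, measure_singleton]
  refine tendsto_integral_of_dominated_convergence
    (fun u => ‖Real.log (t - u) * f u‖ + ‖2⁻¹ * Real.log ((t - u) ^ 2 + 1 ^ 2) * f u‖)
    (fun n => (integrable_log_sq_add_sq_mul (hpos n) hfm hfb hfs t).aestronglyMeasurable)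
    ((integrable_mul_of_bounded_of_support (integrableOn_log_sub t T) hfm hfb hfs).norm.add
      (integrable_log_sq_add_sq_mul one_pos hfm hfb hfs t).norm) (fun n => ?_) ?_
  · filter_upwards [hne] with u hu
    have hx : 0 < (t - u) ^ 2 := by
      have := sub_ne_zero.2 hu.symm
      positivity
    rw [norm_mul, norm_mul _ (f u), norm_mul _ (f u), ← add_mul]
    gcongr
    have e : Real.log (t - u) = 2⁻¹ * Real.log ((t - u) ^ 2) := by
      rw [Real.log_pow]; push_cast; ring
    have h1 : Real.log (t - u) ≤ 2⁻¹ * Real.log ((t - u) ^ 2 + (1 / ((n : ℝ) + 1)) ^ 2) := by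
      rw [e]
      gcongr
      exact le_add_of_nonneg_right (sq_nonneg _)
    have h2 : 2⁻¹ * Real.log ((t - u) ^ 2 + (1 / ((n : ℝ) + 1)) ^ 2) ≤
        2⁻¹ * Real.log ((t - u) ^ 2 + 1 ^ 2) := by
      have : 1 / ((n : ℝ) + 1) ≤ 1 := by
        rw [div_le_one (by positivity)]
        linarith [Nat.cast_nonneg (α := ℝ) n]
      gcongr
    simp only [Real.norm_eq_abs]
    rw [abs_le]
    constructor
    · linarith [neg_abs_le (Real.log (t - u)), abs_nonneg (2⁻¹ * Real.log ((t - u) ^ 2 + 1 ^ 2))]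
    · linarith [le_abs_self (2⁻¹ * Real.log ((t - u) ^ 2 + 1 ^ 2)), abs_nonneg (Real.log (t - u))]
  · filter_upwards [hne] with u hu
    have hx : (t - u) ^ 2 ≠ 0 := pow_ne_zero _ (sub_ne_zero.2 hu.symm)
    have e : Real.log (t - u) = 2⁻¹ * Real.log ((t - u) ^ 2 + 0 ^ 2) := by
      rw [zero_pow two_ne_zero, add_zero, Real.log_pow]; push_cast; ring
    rw [e]
    refine (Tendsto.const_mul _ (Tendsto.log ?_ (by simpa using hx))).mul_const _
    exact (tendsto_one_div_add_atTop_nhds_zero_nat.pow 2).const_add _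

theorem log_potential_deriv
    (hfm : Measurable f) (hfb : ∀ u, |f u| ≤ B) (hfs : ∀ u, u ∉ Ioc 0 T → f u = 0) :
    (∀ᵐ t, DifferentiableAt ℝ (fun t => ∫ u, Real.log (t - u) * f u) t) ∧
      ∫⁻ t, ‖deriv (fun t => ∫ u, Real.log (t - u) * f u) t‖ₑ ^ 2 ≤
        ENNReal.ofReal (2 * Real.pi ^ 2 * ∫ u, f u ^ 2) := by
  have hpos : ∀ n : ℕ, (0 : ℝ) < 1 / ((n : ℝ) + 1) := fun n => by positivity
  have hRH : ∀ (n : ℕ) (a b : ℝ), a ≤ b →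
      (∫ u, 2⁻¹ * Real.log ((b - u) ^ 2 + (1 / ((n : ℝ) + 1)) ^ 2) * f u) -
      (∫ u, 2⁻¹ * Real.log ((a - u) ^ 2 + (1 / ((n : ℝ) + 1)) ^ 2) * f u) =
        ∫ t in a..b, hilbertReg (1 / ((n : ℝ) + 1)) f t := fun n a b hab =>
    log_potential_sub (hpos n) hfm hfb hfs hab
  have hHK : ∀ n : ℕ, ∫⁻ t, ‖hilbertReg (1 / ((n : ℝ) + 1)) f t‖ₑ ^ 2 ≤
      ENNReal.ofReal (2 * Real.pi ^ 2 * ∫ u, f u ^ 2) := fun n => by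
    simpa only [ofReal_sq_eq_enorm_sq] using lintegral_hilbertReg_sq_le (hpos n)
      (integrable_of_bounded_of_support hfm hfb hfs)
      (integrable_sq_of_bounded_of_support hfm hfb hfs)
  have hRm : ∀ n : ℕ, Measurable fun t : ℝ =>
      ∫ u, 2⁻¹ * Real.log ((t - u) ^ 2 + (1 / ((n : ℝ) + 1)) ^ 2) * f u := fun n => by
    have : StronglyMeasurable (Function.uncurry fun t u : ℝ =>
        2⁻¹ * Real.log ((t - u) ^ 2 + (1 / ((n : ℝ) + 1)) ^ 2) * f u) := by
      refine Measurable.stronglyMeasurable ?_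
      unfold Function.uncurry
      fun_prop
    exact this.integral_prod_right.measurable
  exact ⟨ae_differentiableAt_of_tendsto ENNReal.ofReal_ne_top hRH hHK
      (tendsto_log_potential hfm hfb hfs),
    lintegral_deriv_sq_le_of_tendsto ENNReal.ofReal_ne_top (fun n => measurable_hilbertReg _ hfm)
      hRm hRH hHK (tendsto_log_potential hfm hfb hfs)⟩

end LogPotential

/-- Schur's test on `L²`. -/
lemma lintegral_sq_le_of_schur {X : Type*} [MeasurableSpace X] {μ : Measure X} [SFinite μ]
    {k : X → X → ℝ≥0∞} {p g : X → ℝ≥0∞} {A : ℝ≥0∞}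
    (hk : Measurable (Function.uncurry k)) (hp : Measurable p) (hg : Measurable g)
    (hp0 : ∀ᵐ x ∂μ, p x ≠ 0) (hpt : ∀ᵐ x ∂μ, p x ≠ ∞)
    (h1 : ∀ᵐ x ∂μ, ∫⁻ y, k x y * p y ∂μ ≤ A * p x)
    (h2 : ∀ᵐ y ∂μ, ∫⁻ x, k x y * p x ∂μ ≤ A * p y) :
    ∫⁻ x, (∫⁻ y, k x y * g y ∂μ) ^ 2 ∂μ ≤ A ^ 2 * ∫⁻ y, g y ^ 2 ∂μ := by
  have hkx : ∀ x, Measurable (k x) := fun x => hk.of_uncurry_left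
  have hsq : ∀ a : ℝ≥0∞, (a ^ (1 / 2 : ℝ)) ^ 2 = a := fun a => by
    rw [← ENNReal.rpow_two, ← ENNReal.rpow_mul]
    norm_num
  have hpt' : ∀ᵐ x ∂μ, (∫⁻ y, k x y * g y ∂μ) ^ 2 ≤
      ∫⁻ y, (k x y * (A * p x)) * ((p y)⁻¹ * g y ^ 2) ∂μ := by
    filter_upwards [h1] with x hx
    have hcs := sq_lintegral_mul_le (μ := μ) (f := fun y => (k x y * p y) ^ (1 / 2 : ℝ))
      (g := fun y => (k x y * (p y)⁻¹) ^ (1 / 2 : ℝ) * g y)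
      (((hkx x).mul hp).pow_const _).aemeasurable
      ((((hkx x).mul hp.inv).pow_const _).mul hg).aemeasurable
    simp only [mul_pow, hsq] at hcs
    have e : ∫⁻ y, k x y * g y ∂μ = ∫⁻ y, (k x y * p y) ^ (1 / 2 : ℝ) *
        ((k x y * (p y)⁻¹) ^ (1 / 2 : ℝ) * g y) ∂μ := by
      refine lintegral_congr_ae ?_
      filter_upwards [hp0, hpt] with y hy0 hyt
      rw [← mul_assoc, ← ENNReal.mul_rpow_of_nonneg _ _ (by norm_num : (0 : ℝ) ≤ 1 / 2)]
      congr 1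
      have : k x y * p y * (k x y * (p y)⁻¹) = k x y ^ 2 := by
        rw [mul_mul_mul_comm, ENNReal.mul_inv_cancel hy0 hyt, mul_one, sq]
      rw [this, ← ENNReal.rpow_two, ← ENNReal.rpow_mul]
      norm_num
    rw [e]
    refine hcs.trans ?_
    refine (mul_le_mul_left hx _).trans_eq ?_
    rw [← lintegral_const_mul]
    · congr 1
      funext y
      ring
    · exact ((hkx x).mul hp.inv).mul (hg.pow_const 2)
  have hm : Measurable (Function.uncurry fun x y =>
      (k x y * (A * p x)) * ((p y)⁻¹ * g y ^ 2)) := by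
    have : Measurable fun q : X × X => k q.1 q.2 := hk
    unfold Function.uncurry
    fun_prop
  calc ∫⁻ x, (∫⁻ y, k x y * g y ∂μ) ^ 2 ∂μ
      ≤ ∫⁻ x, ∫⁻ y, (k x y * (A * p x)) * ((p y)⁻¹ * g y ^ 2) ∂μ ∂μ := lintegral_mono_ae hpt'
    _ = ∫⁻ y, ∫⁻ x, (k x y * (A * p x)) * ((p y)⁻¹ * g y ^ 2) ∂μ ∂μ :=
        lintegral_lintegral_swap hm.aemeasurable
    _ ≤ ∫⁻ y, A ^ 2 * g y ^ 2 ∂μ := by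
        refine lintegral_mono_ae ?_
        filter_upwards [h2, hp0, hpt] with y hy hy0 hyt
        have hky : Measurable fun x => k x y := hk.of_uncurry_right
        calc ∫⁻ x, (k x y * (A * p x)) * ((p y)⁻¹ * g y ^ 2) ∂μ
            = A * (∫⁻ x, k x y * p x ∂μ) * ((p y)⁻¹ * g y ^ 2) := by
              rw [lintegral_mul_const _ (by fun_prop), ← lintegral_const_mul _ (by fun_prop)]
              congr 2
              funext x
              ring
          _ ≤ A * (A * p y) * ((p y)⁻¹ * g y ^ 2) := by gcongr
          _ = A ^ 2 * g y ^ 2 * (p y * (p y)⁻¹) := by ring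
          _ = _ := by rw [ENNReal.mul_inv_cancel hy0 hyt, mul_one]
    _ = _ := lintegral_const_mul _ (hg.pow_const 2)

lemma lintegral_Ioc_rpow {r a : ℝ} (hr : -1 < r) (ha : 0 < a) :
    ∫⁻ u in Ioc 0 a, ENNReal.ofReal (u ^ r) = ENNReal.ofReal (a ^ (r + 1) / (r + 1)) := by
  have hi : IntegrableOn (fun u : ℝ => u ^ r) (Ioc 0 a) := by
    rw [← intervalIntegrable_iff_integrableOn_Ioc_of_le ha.le]
    exact intervalIntegral.intervalIntegrable_rpow' hr
  rw [← ofReal_integral_eq_lintegral_ofReal hi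
    ((ae_restrict_iff' measurableSet_Ioc).2 (ae_of_all _ fun u hu => Real.rpow_nonneg hu.1.le _)),
    ← intervalIntegral.integral_of_le ha.le, integral_rpow (Or.inl hr),
    Real.zero_rpow (by linarith), sub_zero]

lemma lintegral_Ioi_rpow {r a : ℝ} (hr : r < -1) (ha : 0 < a) :
    ∫⁻ u in Ioi a, ENNReal.ofReal (u ^ r) = ENNReal.ofReal (-a ^ (r + 1) / (r + 1)) := by
  rw [← ofReal_integral_eq_lintegral_ofReal (integrableOn_Ioi_rpow_of_lt hr ha)
    ((ae_restrict_iff' measurableSet_Ioi).2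
      (ae_of_all _ fun u hu => Real.rpow_nonneg (ha.trans hu).le _)),
    integral_Ioi_rpow_of_lt hr ha]

/-- The regular part of the kernel `(u / σ) ^ α / (u - σ)`. -/
noncomputable def regKernel (α σ u : ℝ) : ℝ := ((u / σ) ^ α - 1) / (u - σ)

/-- A Hardy-type majorant of `regKernel`. -/
noncomputable def hardyKernel (α σ u : ℝ) : ℝ :=
  if u ≤ σ then σ⁻¹ else σ ^ (-α) * u ^ (α - 1)

lemma measurable_regKernel (α : ℝ) : Measurable (Function.uncurry (regKernel α)) := by
  unfold Function.uncurry regKernel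
  fun_prop

lemma measurable_hardyKernel (α : ℝ) : Measurable (Function.uncurry (hardyKernel α)) := by
  unfold Function.uncurry hardyKernel
  exact Measurable.ite (measurableSet_le measurable_snd measurable_fst) (by fun_prop)
    (by fun_prop)

section Hardy

variable {α : ℝ}

lemma abs_regKernel_le (h0 : 0 < α) (h1 : α < 1) {σ u : ℝ} (hσ : 0 < σ) (hu : 0 < u) :
    |regKernel α σ u| ≤ hardyKernel α σ u := by
  have hx : 0 < u / σ := by positivity
  rcases lt_trichotomy u σ with h | h | h
  · have hx1 : u / σ ≤ 1 := (div_le_one hσ).2 h.le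
    have h2 : (u / σ) ≤ (u / σ) ^ α := by
      simpa using Real.rpow_le_rpow_of_exponent_ge hx hx1 h1.le
    have h3 : (u / σ) ^ α ≤ 1 := Real.rpow_le_one hx.le hx1 h0.le
    rw [regKernel, hardyKernel, if_pos h.le, abs_div, abs_of_nonpos (by linarith),
      abs_of_neg (by linarith), div_le_iff₀ (by linarith)]
    have : σ⁻¹ * -(u - σ) = 1 - u / σ := by field_simp; ring
    rw [this]
    linarith
  · simp [regKernel, hardyKernel, h, hσ.le]
  · have hx1 : 1 ≤ u / σ := (one_le_div hσ).2 h.le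
    have h3 : 1 ≤ (u / σ) ^ α := Real.one_le_rpow hx1 h0.le
    rw [regKernel, hardyKernel, if_neg (not_le.2 h), abs_div, abs_of_nonneg (by linarith),
      abs_of_pos (by linarith), div_le_iff₀ (by linarith)]
    have e : (u / σ) ^ α = σ ^ (-α) * u ^ (α - 1) * u := by
      rw [Real.div_rpow hu.le hσ.le, Real.rpow_neg hσ.le, Real.rpow_sub_one hu.ne']
      field_simp
    have e2 : σ ^ (-α) * u ^ (α - 1) * σ = (u / σ) ^ (α - 1) := by
      rw [Real.div_rpow hu.le hσ.le, Real.rpow_neg hσ.le, Real.rpow_sub_one hσ.ne']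
      field_simp
    have h4 : (u / σ) ^ (α - 1) ≤ 1 := Real.rpow_le_one_of_one_le_of_nonpos hx1 (by linarith)
    rw [mul_sub, ← e, e2]
    linarith

lemma setLIntegral_Ioi_zero_split (g : ℝ → ℝ≥0∞) {a : ℝ} (ha : 0 < a) :
    ∫⁻ u in Ioi 0, g u = (∫⁻ u in Ioc 0 a, g u) + ∫⁻ u in Ioi a, g u := by
  rw [← Ioc_union_Ioi_eq_Ioi ha.le, lintegral_union measurableSet_Ioi Ioc_disjoint_Ioi_same]

lemma lintegral_hardyKernel_left (h2 : α < 1 / 2) {σ : ℝ} (hσ : 0 < σ) :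
    ∫⁻ u in Ioi 0, ENNReal.ofReal (hardyKernel α σ u) * ENNReal.ofReal (u ^ (-(1 / 2) : ℝ)) =
      ENNReal.ofReal (2 + 1 / (1 / 2 - α)) * ENNReal.ofReal (σ ^ (-(1 / 2) : ℝ)) := by
  rw [setLIntegral_Ioi_zero_split _ hσ]
  have e1 : ∫⁻ u in Ioc 0 σ, ENNReal.ofReal (hardyKernel α σ u) *
      ENNReal.ofReal (u ^ (-(1 / 2) : ℝ)) = ENNReal.ofReal (2 * σ ^ (-(1 / 2) : ℝ)) := by
    rw [setLIntegral_congr_fun (g := fun u => ENNReal.ofReal σ⁻¹ *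
        ENNReal.ofReal (u ^ (-(1 / 2) : ℝ))) measurableSet_Ioc
        (fun u hu => by simp [hardyKernel, hu.2]),
      lintegral_const_mul' _ _ ENNReal.ofReal_ne_top, lintegral_Ioc_rpow (by norm_num) hσ,
      ← ENNReal.ofReal_mul (by positivity), Real.rpow_add_one hσ.ne']
    congr 1
    field_simp
    norm_num
  have e2 : ∫⁻ u in Ioi σ, ENNReal.ofReal (hardyKernel α σ u) *
      ENNReal.ofReal (u ^ (-(1 / 2) : ℝ)) =
        ENNReal.ofReal (1 / (1 / 2 - α) * σ ^ (-(1 / 2) : ℝ)) := by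
    rw [setLIntegral_congr_fun (g := fun u => ENNReal.ofReal (σ ^ (-α)) *
        ENNReal.ofReal (u ^ (α - 3 / 2 : ℝ))) measurableSet_Ioi
        (fun u hu => ?_),
      lintegral_const_mul' _ _ ENNReal.ofReal_ne_top, lintegral_Ioi_rpow (by linarith) hσ,
      ← ENNReal.ofReal_mul (by positivity)]
    · congr 1
      have : σ ^ (-(1 / 2) : ℝ) = σ ^ (-α) * σ ^ (α - 3 / 2 + 1) := by
        rw [← Real.rpow_add hσ]; congr 1; ring
      rw [this]
      have h3 : (1 / 2 - α) ≠ 0 := by linarith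
      have h4 : α - 3 / 2 + 1 = -(1 / 2 - α) := by ring
      rw [h4, neg_div_neg_eq]
      ring
    · have hu0 : 0 < u := hσ.trans hu
      simp only [hardyKernel, if_neg (not_le.2 (mem_Ioi.1 hu))]
      rw [← ENNReal.ofReal_mul (by positivity), ← ENNReal.ofReal_mul (by positivity), mul_assoc,
        ← Real.rpow_add hu0]
      congr 3
      ring
  have h5 : 0 < 1 / 2 - α := by linarith
  rw [e1, e2, ← ENNReal.ofReal_add (by positivity) (by positivity), ← ENNReal.ofReal_mul
    (by positivity)]
  congr 1
  ring

lemma lintegral_hardyKernel_right (h2 : α < 1 / 2) {u : ℝ} (hu : 0 < u) :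
    ∫⁻ σ in Ioi 0, ENNReal.ofReal (hardyKernel α σ u) * ENNReal.ofReal (σ ^ (-(1 / 2) : ℝ)) =
      ENNReal.ofReal (2 + 1 / (1 / 2 - α)) * ENNReal.ofReal (u ^ (-(1 / 2) : ℝ)) := by
  rw [setLIntegral_Ioi_zero_split _ hu]
  have e1 : ∫⁻ σ in Ioi u, ENNReal.ofReal (hardyKernel α σ u) *
      ENNReal.ofReal (σ ^ (-(1 / 2) : ℝ)) = ENNReal.ofReal (2 * u ^ (-(1 / 2) : ℝ)) := by
    rw [setLIntegral_congr_fun (g := fun σ =>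
        ENNReal.ofReal (σ ^ (-(3 / 2) : ℝ))) measurableSet_Ioi
        (fun σ hσ => ?_), lintegral_Ioi_rpow (by norm_num) hu]
    · congr 1
      norm_num
      ring
    · have hσ0 : 0 < σ := hu.trans hσ
      simp only [hardyKernel, if_pos (mem_Ioi.1 hσ).le]
      rw [← ENNReal.ofReal_mul (by positivity), ← Real.rpow_neg_one, ← Real.rpow_add hσ0]
      norm_num
  have e2 : ∫⁻ σ in Ioc 0 u, ENNReal.ofReal (hardyKernel α σ u) *
      ENNReal.ofReal (σ ^ (-(1 / 2) : ℝ)) =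
        ENNReal.ofReal (1 / (1 / 2 - α) * u ^ (-(1 / 2) : ℝ)) := by
    rw [setLIntegral_congr_fun (g := fun σ => ENNReal.ofReal (u ^ (α - 1)) *
        ENNReal.ofReal (σ ^ (-α - 1 / 2 : ℝ))) measurableSet_Ioc
        (fun σ hσ => ?_),
      lintegral_const_mul' _ _ ENNReal.ofReal_ne_top, lintegral_Ioc_rpow (by linarith) hu,
      ← ENNReal.ofReal_mul (by positivity)]
    · congr 1
      have : u ^ (-(1 / 2) : ℝ) = u ^ (α - 1) * u ^ (-α - 1 / 2 + 1) := by
        rw [← Real.rpow_add hu]; congr 1; ring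
      rw [this]
      have h4 : -α - 1 / 2 + 1 = 1 / 2 - α := by ring
      rw [h4]
      ring
    · have hσ0 : 0 < σ := hσ.1
      have hk : hardyKernel α σ u = σ ^ (-α) * u ^ (α - 1) := by
        rw [hardyKernel]
        split_ifs with h
        · obtain rfl : σ = u := le_antisymm hσ.2 h
          rw [← Real.rpow_neg_one, ← Real.rpow_add hσ0]
          congr 1
          ring
        · rfl
      simp only [hk]
      rw [← ENNReal.ofReal_mul (by positivity), ← ENNReal.ofReal_mul (by positivity),
        mul_comm (σ ^ (-α)), mul_assoc, ← Real.rpow_add hσ0]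
      congr 3
  have h5 : 0 < 1 / 2 - α := by linarith
  rw [e1, e2, ← ENNReal.ofReal_add (by positivity) (by positivity), ← ENNReal.ofReal_mul
    (by positivity)]
  congr 1
  ring

variable {f : ℝ → ℝ} {B T : ℝ}

lemma lintegral_regKernel_sq_le (h0 : 0 < α) (h2 : α < 1 / 2) (hfm : Measurable f)
    (hfs : ∀ u, u ∉ Ioc 0 T → f u = 0) :
    ∫⁻ σ in Ioi 0, (∫⁻ u, ‖regKernel α σ u * f u‖ₑ) ^ 2 ≤
      ENNReal.ofReal (2 + 1 / (1 / 2 - α)) ^ 2 * ∫⁻ u, ‖f u‖ₑ ^ 2 := by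
  have hae : ∀ {P : ℝ → Prop}, (∀ x : ℝ, 0 < x → P x) → ∀ᵐ x ∂volume.restrict (Ioi (0 : ℝ)), P x :=
    fun h => (ae_restrict_iff' measurableSet_Ioi).2 (ae_of_all _ h)
  have hS := lintegral_sq_le_of_schur (μ := volume.restrict (Ioi (0 : ℝ)))
    (k := fun σ u => ENNReal.ofReal (hardyKernel α σ u))
    (p := fun u => ENNReal.ofReal (u ^ (-(1 / 2) : ℝ))) (g := fun u => ‖f u‖ₑ)
    (A := ENNReal.ofReal (2 + 1 / (1 / 2 - α)))
    (measurable_hardyKernel α).ennreal_ofReal (by fun_prop) (by fun_prop)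
    (hae fun x hx => (ENNReal.ofReal_pos.2 (Real.rpow_pos_of_pos hx _)).ne')
    (hae fun x _ => ENNReal.ofReal_ne_top)
    (hae fun x hx => (lintegral_hardyKernel_left h2 hx).le)
    (hae fun x hx => (lintegral_hardyKernel_right h2 hx).le)
  calc ∫⁻ σ in Ioi 0, (∫⁻ u, ‖regKernel α σ u * f u‖ₑ) ^ 2
      ≤ ∫⁻ σ in Ioi 0, (∫⁻ u in Ioi 0, ENNReal.ofReal (hardyKernel α σ u) * ‖f u‖ₑ) ^ 2 := by
        refine lintegral_mono_ae (hae fun σ hσ => ?_)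
        refine pow_le_pow_left₀ zero_le ?_ 2
        rw [← lintegral_indicator measurableSet_Ioi]
        refine lintegral_mono fun u => ?_
        by_cases hu : u ∈ Ioi (0 : ℝ)
        · rw [indicator_of_mem hu, enorm_mul, Real.enorm_eq_ofReal_abs]
          gcongr
          exact abs_regKernel_le h0 (by linarith) hσ hu
        · rw [hfs u fun h => hu h.1]
          simp
    _ ≤ _ := hS
    _ ≤ _ := by gcongr; exact Measure.restrict_le_self

lemma integrable_regKernel_mul (h0 : 0 < α) (h2 : α < 1 / 2) (hfm : Measurable f)
    (hfb : ∀ u, |f u| ≤ B) (hfs : ∀ u, u ∉ Ioc 0 T → f u = 0) (τ : ℝ) :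
    Integrable (Function.uncurry fun σ u => regKernel α σ u * f u)
      ((volume.restrict (Ioc 0 τ)).prod volume) := by
  have hm : Measurable (Function.uncurry fun σ u => regKernel α σ u * f u) :=
    (measurable_regKernel α).mul (hfm.comp measurable_snd)
  refine ⟨hm.aestronglyMeasurable, ?_⟩
  rw [HasFiniteIntegral, lintegral_prod _ hm.enorm.aemeasurable]
  have hG : Measurable fun σ => ∫⁻ u, ‖regKernel α σ u * f u‖ₑ := hm.enorm.lintegral_prod_right'
  have hcs := sq_lintegral_mul_le (μ := volume.restrict (Ioc 0 τ)) (f := fun _ => 1)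
    aemeasurable_const hG.aemeasurable
  simp only [one_mul, one_pow, lintegral_const, Measure.restrict_apply, MeasurableSet.univ,
      univ_inter, Real.volume_Ioc, sub_zero] at hcs
  have hfin : ∫⁻ u, ‖f u‖ₑ ^ 2 < ∞ := by
    have := (integrable_sq_of_bounded_of_support hfm hfb hfs).2
    simpa [HasFiniteIntegral, enorm_pow] using this
  have hle := (lintegral_mono_set (μ := volume) (f := fun σ =>
    (∫⁻ u, ‖regKernel α σ u * f u‖ₑ) ^ 2) (fun x (hx : x ∈ Ioc (0 : ℝ) τ) => mem_Ioi.2 hx.1)).trans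
    (lintegral_regKernel_sq_le h0 h2 hfm hfs)
  have hlt : ENNReal.ofReal τ * ∫⁻ σ in Ioc 0 τ, (∫⁻ u, ‖regKernel α σ u * f u‖ₑ) ^ 2 < ∞ :=
    ENNReal.mul_lt_top ENNReal.ofReal_lt_top
      (hle.trans_lt (ENNReal.mul_lt_top (by finiteness) hfin))
  by_contra htop
  simp only [Function.uncurry, not_lt, top_le_iff] at htop
  rw [htop, ENNReal.top_pow two_ne_zero, top_le_iff] at hcs
  exact hlt.ne hcs

end Hardy

section Kernel

variable {α τ u : ℝ}

/-- The kernel of the composition of a left and a right fractional integral of total order one,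
without its normalising constant. -/
noncomputable def mixedKernel (α τ u : ℝ) : ℝ :=
  ∫ s in Ioo 0 (min τ u), (τ - s) ^ (-α) * (u - s) ^ (α - 1)

lemma mixedKernel_eq_integral_image (hu : 0 < u) (hne : u ≠ τ) :
    mixedKernel α τ u = ∫ σ in (fun s => u * (τ - s) / (u - s)) '' Ioo 0 (min τ u),
      (u / σ) ^ α / |u - σ| := by
  have hpos : ∀ s ∈ Ioo 0 (min τ u), 0 < τ - s ∧ 0 < u - s := fun s hs =>
    ⟨sub_pos.2 (lt_min_iff.1 hs.2).1, sub_pos.2 (lt_min_iff.1 hs.2).2⟩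
  have hne' : u - τ ≠ 0 := sub_ne_zero.2 hne
  rw [integral_image_eq_integral_abs_deriv_smul (f' := fun s => u * (τ - u) / (u - s) ^ 2)
    measurableSet_Ioo, mixedKernel]
  · refine setIntegral_congr_fun measurableSet_Ioo fun s hs => ?_
    obtain ⟨h1, h2⟩ := hpos s hs
    have e1 : u / (u * (τ - s) / (u - s)) = (u - s) / (τ - s) := by field_simp
    have e2 : u - u * (τ - s) / (u - s) = u * (u - τ) / (u - s) := by field_simp; ring
    simp only [smul_eq_mul]
    rw [e1, e2, Real.div_rpow h2.le h1.le, Real.rpow_neg h1.le, Real.rpow_sub_one h2.ne',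
      abs_div, abs_div, abs_mul, abs_mul, abs_sub_comm τ u, abs_of_pos hu, abs_of_pos h2,
      abs_of_pos (pow_pos h2 2)]
    have : |u - τ| ≠ 0 := abs_ne_zero.2 hne'
    field_simp
  · intro s hs
    obtain ⟨h1, h2⟩ := hpos s hs
    refine HasDerivAt.hasDerivWithinAt ?_
    have := (((hasDerivAt_id s).const_sub τ).const_mul u).div ((hasDerivAt_id s).const_sub u) h2.ne'
    refine this.congr_deriv ?_
    simp only [id]
    congr 1
    ring
  · intro s hs s' hs' h
    obtain ⟨h1, h2⟩ := hpos s hs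
    obtain ⟨h3, h4⟩ := hpos s' hs'
    simp only at h
    rw [div_eq_div_iff h2.ne' h4.ne'] at h
    have : u * (u - τ) * (s - s') = 0 := by linarith
    rcases mul_eq_zero.1 this with h5 | h5
    · exact absurd h5 (mul_ne_zero hu.ne' hne')
    · linarith

lemma image_mobius_of_lt (hτ : 0 < τ) (h : τ < u) :
    (fun s => u * (τ - s) / (u - s)) '' Ioo 0 (min τ u) = Ioo 0 τ := by
  have hu : 0 < u := hτ.trans h
  rw [min_eq_left h.le]
  have hmaps : ∀ s ∈ Ioo 0 τ, u * (τ - s) / (u - s) ∈ Ioo 0 τ := fun s hs => by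
    have h1 : 0 < τ - s := sub_pos.2 hs.2
    have h2 : 0 < u - s := by linarith
    refine ⟨by positivity, ?_⟩
    rw [div_lt_iff₀ h2]
    nlinarith [hs.1]
  refine Subset.antisymm (image_subset_iff.2 hmaps) fun σ hσ => ⟨_, hmaps σ hσ, ?_⟩
  have h2 : u - σ ≠ 0 := by linarith [hσ.2]
  have h3 : u - τ ≠ 0 := by linarith
  have e : u - u * (τ - σ) / (u - σ) = u * (u - τ) / (u - σ) := by field_simp; ring
  have e' : τ - u * (τ - σ) / (u - σ) = σ * (u - τ) / (u - σ) := by field_simp; ring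
  simp only [e, e']
  field_simp

lemma image_mobius_of_gt (hu : 0 < u) (h : u < τ) :
    (fun s => u * (τ - s) / (u - s)) '' Ioo 0 (min τ u) = Ioi τ := by
  rw [min_eq_right h.le]
  refine Subset.antisymm (image_subset_iff.2 fun s hs => ?_) fun σ hσ =>
    ⟨u * (τ - σ) / (u - σ), ⟨?_, ?_⟩, ?_⟩
  · have h2 : 0 < u - s := sub_pos.2 hs.2
    rw [mem_preimage, mem_Ioi, lt_div_iff₀ h2]
    nlinarith [hs.1]
  all_goals
    rw [mem_Ioi] at hσ
  · exact div_pos_of_neg_of_neg (mul_neg_of_pos_of_neg hu (by linarith)) (by linarith)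
  · rw [div_lt_iff_of_neg (by linarith)]
    nlinarith
  · have h2 : u - σ ≠ 0 := by linarith
    have h3 : u - τ ≠ 0 := by linarith
    have e : u - u * (τ - σ) / (u - σ) = u * (u - τ) / (u - σ) := by field_simp; ring
    have e' : τ - u * (τ - σ) / (u - σ) = σ * (u - τ) / (u - σ) := by field_simp; ring
    simp only [e, e']
    field_simp

lemma integrableOn_regKernel (h0 : 0 < α) (h1 : α < 1) (hu : 0 < u) (τ : ℝ) :
    IntegrableOn (fun σ => regKernel α σ u) (Ioc 0 τ) := by
  rcases le_or_gt τ 0 with hτ | hτ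
  · simp [Ioc_eq_empty_of_le hτ]
  have hi : IntegrableOn (fun σ : ℝ => u⁻¹ + σ ^ (-α) * u ^ (α - 1)) (Ioc 0 τ) := by
    refine Integrable.add (integrableOn_const (by simp)) (Integrable.mul_const ?_ _)
    change IntegrableOn (fun σ : ℝ => σ ^ (-α)) (Ioc 0 τ)
    rw [← intervalIntegrable_iff_integrableOn_Ioc_of_le hτ.le]
    exact intervalIntegral.intervalIntegrable_rpow' (by linarith)
  refine Integrable.mono' hi ?_ ?_
  · exact (measurable_regKernel α).of_uncurry_right.aestronglyMeasurable
  · refine (ae_restrict_iff' measurableSet_Ioc).2 (ae_of_all _ fun σ hσ => ?_)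
    have hσ0 : 0 < σ := hσ.1
    refine (abs_regKernel_le h0 h1 hσ.1 hu).trans ?_
    rw [hardyKernel]
    split_ifs with h
    · have : σ⁻¹ ≤ u⁻¹ := inv_anti₀ hu h
      have : 0 ≤ σ ^ (-α) * u ^ (α - 1) := by positivity
      linarith
    · have : 0 < u⁻¹ := by positivity
      linarith

lemma mixedKernel_of_lt (h0 : 0 < α) (h1 : α < 1) (hτ : 0 < τ) (h : τ < u) :
    mixedKernel α τ u = Real.log u - Real.log (τ - u) + ∫ σ in Ioc 0 τ, regKernel α σ u := by
  have hu : 0 < u := hτ.trans h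
  rw [mixedKernel_eq_integral_image hu h.ne', image_mobius_of_lt hτ h,
    ← integral_Ioc_eq_integral_Ioo]
  have hc : ContinuousOn (fun σ : ℝ => 1 / (u - σ)) (uIcc 0 τ) := by
    refine ContinuousOn.div continuousOn_const (by fun_prop) fun σ hσ => ?_
    rw [uIcc_of_le hτ.le] at hσ
    linarith [hσ.2]
  have hi : IntegrableOn (fun σ : ℝ => 1 / (u - σ)) (Ioc 0 τ) :=
    (intervalIntegrable_iff_integrableOn_Ioc_of_le hτ.le).1 hc.intervalIntegrable
  have e1 : ∫ σ in Ioc 0 τ, 1 / (u - σ) = Real.log u - Real.log (τ - u) := by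
    rw [← intervalIntegral.integral_of_le hτ.le, intervalIntegral.integral_eq_sub_of_hasDerivAt
      (f := fun σ => -Real.log (u - σ)) _ hc.intervalIntegrable]
    · rw [sub_zero, ← Real.log_neg_eq_log (τ - u), neg_sub]
      ring
    · intro σ hσ
      rw [uIcc_of_le hτ.le] at hσ
      have h2 : u - σ ≠ 0 := by linarith [hσ.2]
      refine (((hasDerivAt_id σ).const_sub u).log h2).neg.congr_deriv ?_
      simp only [id]
      ring
  rw [← e1, ← integral_add hi (integrableOn_regKernel h0 h1 hu τ)]
  refine setIntegral_congr_fun measurableSet_Ioc fun σ hσ => ?_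
  have h2 : 0 < u - σ := by linarith [hσ.2]
  simp only [regKernel, abs_of_pos h2]
  ring

lemma integrableOn_Ioi_inv_rpow_div (h0 : 0 < α) {X : ℝ} (hX : 1 < X) :
    IntegrableOn (fun y : ℝ => (1 / y) ^ α / (y - 1)) (Ioi X) := by
  have hX0 : 0 < X := by linarith
  refine Integrable.mono' ((integrableOn_Ioi_rpow_of_lt (a := -α - 1) (by linarith) hX0).const_mul
    (X / (X - 1))) (Measurable.aestronglyMeasurable (by fun_prop)) ?_
  refine (ae_restrict_iff' measurableSet_Ioi).2 (ae_of_all _ fun y hy => ?_)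
  rw [mem_Ioi] at hy
  have hy0 : 0 < y := by linarith
  have hy1 : 0 < y - 1 := by linarith
  have hX1 : 0 < X - 1 := by linarith
  rw [Real.norm_of_nonneg (by positivity), Real.rpow_sub_one hy0.ne', Real.rpow_neg hy0.le,
    one_div, Real.inv_rpow hy0.le, div_mul_div_comm, div_le_div_iff₀ hy1 (by positivity)]
  have : 0 < (y ^ α)⁻¹ := by positivity
  nlinarith

/-- The jump of the regular part of `mixedKernel` across the diagonal. -/
noncomputable def kernelJump (α : ℝ) : ℝ :=
  (∫ y in Ioi (2 : ℝ), (1 / y) ^ α / (y - 1)) - ∫ y in (0 : ℝ)..2, regKernel α y 1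

lemma integral_Ioi_inv_rpow_div (h0 : 0 < α) (h1 : α < 1) {X : ℝ} (hX : 1 < X) :
    ∫ y in Ioi X, (1 / y) ^ α / (y - 1) =
      -Real.log (X - 1) + (∫ y in (0 : ℝ)..X, regKernel α y 1) + kernelJump α := by
  have hreg : ∀ a b : ℝ, 0 ≤ a → 0 ≤ b →
      IntervalIntegrable (fun y => regKernel α y 1) volume a b := by
    have h : ∀ b : ℝ, 0 ≤ b → IntervalIntegrable (fun y => regKernel α y 1) volume 0 b :=
      fun b hb => (intervalIntegrable_iff_integrableOn_Ioc_of_le hb).2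
        (integrableOn_regKernel h0 h1 one_pos b)
    exact fun a b ha hb => (h a ha).symm.trans (h b hb)
  have hpos : ∀ y ∈ uIcc X 2, 0 < y - 1 := fun y hy => by
    have : min X 2 ≤ y := hy.1
    have : 1 < min X 2 := lt_min hX one_lt_two
    linarith
  have hc : ContinuousOn (fun y : ℝ => 1 / (y - 1)) (uIcc X 2) :=
    ContinuousOn.div continuousOn_const (by fun_prop) fun y hy => (hpos y hy).ne'
  have e1 : ∫ y in X..2, 1 / (y - 1) = -Real.log (X - 1) := by
    rw [intervalIntegral.integral_eq_sub_of_hasDerivAt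
      (f := fun y => Real.log (y - 1)) _ hc.intervalIntegrable]
    · norm_num
    · exact fun y hy => ((hasDerivAt_id y).sub_const 1).log (hpos y hy).ne'
  have e2 : ∫ y in X..2, (1 / y) ^ α / (y - 1) =
      (∫ y in X..2, 1 / (y - 1)) - ∫ y in X..2, regKernel α y 1 := by
    rw [← intervalIntegral.integral_sub hc.intervalIntegrable
      (hreg _ _ (by linarith) (by norm_num))]
    refine intervalIntegral.integral_congr fun y hy => ?_
    have h3 : y - 1 ≠ 0 := (hpos y hy).ne'
    have h4 : 1 - y ≠ 0 := by rw [← neg_sub]; exact neg_ne_zero.2 h3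
    simp only [regKernel]
    field_simp
    ring
  have e3 := intervalIntegral.integral_interval_add_Ioi' (a := X) (b := 2) (μ := volume)
    (f := fun y : ℝ => (1 / y) ^ α / (y - 1)) ?_ (integrableOn_Ioi_inv_rpow_div h0 one_lt_two)
  · have e4 := intervalIntegral.integral_add_adjacent_intervals (hreg 0 X le_rfl (by linarith))
      (hreg X 2 (by linarith) (by norm_num))
    rw [← e3, e2, e1, kernelJump]
    linarith
  · rw [intervalIntegrable_iff]
    exact (integrableOn_Ioi_inv_rpow_div h0 (lt_min hX one_lt_two)).mono_set fun y hy => hy.1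

lemma mixedKernel_of_gt (h0 : 0 < α) (h1 : α < 1) (hu : 0 < u) (h : u < τ) :
    mixedKernel α τ u = Real.log u - Real.log (τ - u) + (∫ σ in Ioc 0 τ, regKernel α σ u) +
      kernelJump α := by
  have hτ : 0 < τ := hu.trans h
  have hX : 1 < τ / u := (one_lt_div hu).2 h
  rw [mixedKernel_eq_integral_image hu h.ne, image_mobius_of_gt hu h,
    ← intervalIntegral.integral_of_le hτ.le]
  have e1 : ∫ σ in Ioi τ, (u / σ) ^ α / |u - σ| =
      ∫ y in Ioi (τ / u), (1 / y) ^ α / (y - 1) := by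
    have := integral_comp_mul_left_Ioi (fun σ => (u / σ) ^ α / |u - σ|) (τ / u) hu
    rw [mul_div_cancel₀ _ hu.ne', smul_eq_mul, eq_comm, inv_mul_eq_iff_eq_mul₀ hu.ne',
      ← integral_const_mul] at this
    rw [this]
    refine setIntegral_congr_fun measurableSet_Ioi fun y hy => ?_
    have hy1 : 0 < y - 1 := by linarith [mem_Ioi.1 hy]
    have e : u - u * y = -(u * (y - 1)) := by ring
    have e' : u / (u * y) = 1 / y := by field_simp
    rw [e, e', abs_neg, abs_of_pos (by positivity)]
    field_simp
  have e2 : ∫ σ in (0 : ℝ)..τ, regKernel α σ u = ∫ y in (0 : ℝ)..(τ / u), regKernel α y 1 := by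
    have := intervalIntegral.integral_comp_mul_left (a := 0) (b := τ / u)
      (fun σ => regKernel α σ u) hu.ne'
    rw [mul_div_cancel₀ _ hu.ne', mul_zero, smul_eq_mul, eq_comm, inv_mul_eq_iff_eq_mul₀ hu.ne',
      ← intervalIntegral.integral_const_mul] at this
    rw [this]
    refine intervalIntegral.integral_congr fun y _ => ?_
    have e : u - u * y = u * (1 - y) := by ring
    have e' : u / (u * y) = 1 / y := by field_simp
    simp only [regKernel]
    rw [e, e', mul_div_assoc', mul_div_mul_left _ _ hu.ne']
  have e3 : Real.log (τ / u - 1) = Real.log (τ - u) - Real.log u := by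
    rw [← Real.log_div (by linarith) hu.ne']
    congr 1
    field_simp
  rw [e1, e2, integral_Ioi_inv_rpow_div h0 h1 hX, e3]
  ring

lemma mixedKernel_eq (h0 : 0 < α) (h1 : α < 1) (hτ : 0 < τ) (hu : 0 < u) (hne : u ≠ τ) :
    mixedKernel α τ u = Real.log u - Real.log (τ - u) + (∫ σ in Ioc 0 τ, regKernel α σ u) +
      (Ioc 0 τ).indicator (fun _ => kernelJump α) u := by
  rcases lt_or_gt_of_ne hne with h | h
  · rw [indicator_of_mem (show u ∈ Ioc 0 τ from ⟨hu, h.le⟩), mixedKernel_of_gt h0 h1 hu h]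
  · rw [indicator_of_notMem (show u ∉ Ioc 0 τ from fun h' => h.not_ge h'.2),
      mixedKernel_of_lt h0 h1 hτ h, add_zero]

end Kernel

section Composition

variable {α τ T B : ℝ} {e f : ℝ → ℝ}

/-- Interchanging the order of integration in the composition of the two fractional integrals. -/
lemma integral_rlKernel_mul_eq (h0 : 0 < α) (h1 : α < 1) (hτ : 0 < τ) (hτT : τ < T)
    (hfm : Measurable f) (hfb : ∀ u, |f u| ≤ B) (hfs : ∀ u, u ∉ Ioc 0 T → f u = 0)
    (hfe : ∀ u ∈ Ioc 0 T, f u = e u) :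
    ∫ s in (0 : ℝ)..τ, rlKernel (1 - α) (τ - s) * (∫ u in s..T, rlKernel α (u - s) * e u) =
      1 / (Real.Gamma (1 - α) * Real.Gamma α) * ∫ u, mixedKernel α τ u * f u := by
  set a : ℝ → ℝ := (Ioo 0 τ).indicator fun s => (τ - s) ^ (-α) with ha
  set ψ : ℝ → ℝ := (Ioc 0 T).indicator fun x => x ^ (α - 1) with hψ
  have hT : 0 < T := hτ.trans hτT
  have hai : Integrable a := by
    rw [ha, integrable_indicator_iff measurableSet_Ioo, ← integrableOn_Ioc_iff_integrableOn_Ioo,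
      ← intervalIntegrable_iff_integrableOn_Ioc_of_le hτ.le]
    have := (intervalIntegral.intervalIntegrable_rpow' (a := 0) (b := τ) (r := -α)
      (by linarith)).comp_sub_left τ
    simpa using this.symm
  have hψi : Integrable ψ := by
    rw [hψ, integrable_indicator_iff measurableSet_Ioc,
      ← intervalIntegrable_iff_integrableOn_Ioc_of_le hT.le]
    exact intervalIntegral.intervalIntegrable_rpow' (by linarith)
  have hprod : Integrable (Function.uncurry fun u s : ℝ => a s * ψ (u - s) * f u)
      (volume.prod volume) := by
    have h := hai.convolution_integrand (ContinuousLinearMap.mul ℝ ℝ) hψi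
    refine h.mul_bdd (c := B) (hfm.comp measurable_fst).aestronglyMeasurable
      (ae_of_all _ fun p => hfb p.1)
  have hswap := integral_integral_swap hprod
  have hu : ∀ u, ∫ s, a s * ψ (u - s) * f u = mixedKernel α τ u * f u := fun u => by
    rw [integral_mul_const]
    by_cases hu : u ∈ Ioc 0 T
    · rw [mixedKernel, ← integral_indicator measurableSet_Ioo]
      congr 2
      ext s
      by_cases hs : s ∈ Ioo 0 (min τ u)
      · have hs1 : s ∈ Ioo 0 τ := ⟨hs.1, (lt_min_iff.1 hs.2).1⟩
        have hs2 : u - s ∈ Ioc 0 T :=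
          ⟨sub_pos.2 (lt_min_iff.1 hs.2).2, by linarith [hs.1, hu.2]⟩
        rw [indicator_of_mem hs, ha, hψ, indicator_of_mem hs1, indicator_of_mem hs2]
      · rw [indicator_of_notMem hs]
        by_cases hs1 : s ∈ Ioo 0 τ
        · have hs2 : u - s ∉ Ioc 0 T := fun h =>
            hs ⟨hs1.1, lt_min hs1.2 (sub_pos.1 h.1)⟩
          rw [hψ, indicator_of_notMem hs2, mul_zero]
        · rw [ha, indicator_of_notMem hs1, zero_mul]
    · rw [hfs u hu, mul_zero, mul_zero]
  simp only [hu] at hswap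
  rw [hswap, intervalIntegral.integral_of_le hτ.le, integral_Ioc_eq_integral_Ioo,
    ← integral_const_mul, ← integral_indicator measurableSet_Ioo]
  congr 1
  ext s
  by_cases hs : s ∈ Ioo 0 τ
  · have e1 : ∫ u, a s * ψ (u - s) * f u = (τ - s) ^ (-α) *
        ∫ u in s..T, (u - s) ^ (α - 1) * e u := by
      have hsT : s ≤ T := (hs.2.trans hτT).le
      rw [intervalIntegral.integral_of_le hsT, ← integral_indicator measurableSet_Ioc,
        ← integral_const_mul]
      congr 1
      ext u
      rw [ha, indicator_of_mem hs, mul_assoc]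
      congr 1
      by_cases hus : u ∈ Ioc s T
      · rw [indicator_of_mem hus, hψ, indicator_of_mem
          (show u - s ∈ Ioc 0 T from ⟨sub_pos.2 hus.1, by linarith [hus.2, hs.1]⟩),
          hfe u ⟨hs.1.trans hus.1, hus.2⟩]
      · rw [indicator_of_notMem hus]
        by_cases hu' : u ∈ Ioc 0 T
        · rw [hψ, indicator_of_notMem (fun h => hus ⟨sub_pos.1 h.1, hu'.2⟩), zero_mul]
        · rw [hfs u hu', mul_zero]
    rw [indicator_of_mem hs, e1]
    have e2 : ∫ u in s..T, rlKernel α (u - s) * e u =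
        (∫ u in s..T, (u - s) ^ (α - 1) * e u) / Real.Gamma α := by
      rw [← intervalIntegral.integral_div]
      congr 1
      ext u
      rw [rlKernel]
      ring
    have e3 : 1 - α - 1 = -α := by ring
    rw [e2, rlKernel, e3]
    field_simp
  · rw [indicator_of_notMem hs, ha]
    simp [indicator_of_notMem hs]

/-- Decomposition of the composition into a logarithmic potential and absolutely continuous
terms. -/
lemma integral_mixedKernel_mul_eq (h0 : 0 < α) (h2 : α < 1 / 2) (hτ : 0 < τ)
    (hfm : Measurable f) (hfb : ∀ u, |f u| ≤ B) (hfs : ∀ u, u ∉ Ioc 0 T → f u = 0) :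
    ∫ u, mixedKernel α τ u * f u =
      (∫ u, Real.log u * f u) - (∫ u, Real.log (τ - u) * f u) +
        (∫ σ in (0 : ℝ)..τ, ∫ u, regKernel α σ u * f u) +
        kernelJump α * ∫ u in (0 : ℝ)..τ, f u := by
  have hf := integrable_of_bounded_of_support hfm hfb hfs
  have i1 : Integrable fun u => Real.log u * f u := by
    refine integrable_mul_of_bounded_of_support ?_ hfm hfb hfs
    simpa using integrableOn_log_sub 0 T
  have i2 := integrable_mul_of_bounded_of_support (integrableOn_log_sub τ T) hfm hfb hfs
  have hreg := integrable_regKernel_mul h0 h2 hfm hfb hfs τ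
  have i3 : Integrable fun u => ∫ σ in Ioc 0 τ, regKernel α σ u * f u := hreg.integral_prod_right
  have i4 : Integrable ((Ioc 0 τ).indicator fun u => kernelJump α * f u) :=
    (hf.const_mul _).indicator measurableSet_Ioc
  have i12 : Integrable fun u => Real.log u * f u - Real.log (τ - u) * f u := i1.sub i2
  have i123 : Integrable fun u => Real.log u * f u - Real.log (τ - u) * f u +
      ∫ σ in Ioc 0 τ, regKernel α σ u * f u := i12.add i3
  rw [intervalIntegral.integral_of_le hτ.le, intervalIntegral.integral_of_le hτ.le,
    integral_integral_swap hreg, ← integral_const_mul, ← integral_indicator measurableSet_Ioc,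
    ← integral_sub i1 i2, ← integral_add i12 i3, ← integral_add i123 i4]
  have hne : ∀ᵐ u : ℝ, u ≠ τ := by simp [ae_iff]
  refine integral_congr_ae (hne.mono fun u hu => ?_)
  by_cases huT : u ∈ Ioc 0 T
  · beta_reduce
    rw [mixedKernel_eq h0 (by linarith) hτ huT.1 hu, integral_mul_const, indicator_mul_left]
    ring
  · simp [hfs u huT, indicator_apply]

end Composition

section Stability

variable {α T B K : ℝ} {f D : ℝ → ℝ}

lemma intervalIntegral_sq_le_of_lintegral_le (hT : 0 ≤ T) (hK : 0 ≤ K)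
    (h : ∫⁻ t in Ioc 0 T, ‖D t‖ₑ ^ 2 ≤ ENNReal.ofReal K) : ∫ t in (0 : ℝ)..T, D t ^ 2 ≤ K := by
  rw [intervalIntegral.integral_of_le hT]
  have h1 := (enorm_integral_le_lintegral_enorm (μ := volume.restrict (Ioc 0 T))
    fun t => D t ^ 2).trans (by simpa only [enorm_pow] using h)
  rw [Real.enorm_eq_ofReal_abs, ENNReal.ofReal_le_ofReal_iff hK] at h1
  exact (le_abs_self _).trans h1

lemma enorm_mul_neg_add_add_sq_le (c a b d : ℝ) :
    ‖c * (-a + b + d)‖ₑ ^ 2 ≤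
      ENNReal.ofReal (3 * c ^ 2) * (‖a‖ₑ ^ 2 + ‖b‖ₑ ^ 2 + ‖d‖ₑ ^ 2) := by
  simp only [← ofReal_sq_eq_enorm_sq]
  rw [← ENNReal.ofReal_add (by positivity) (by positivity),
    ← ENNReal.ofReal_add (by positivity) (by positivity), ← ENNReal.ofReal_mul (by positivity)]
  refine ENNReal.ofReal_le_ofReal ?_
  have : (-a + b + d) ^ 2 ≤ 3 * (a ^ 2 + b ^ 2 + d ^ 2) := by
    nlinarith [sq_nonneg (a + b), sq_nonneg (a + d), sq_nonneg (b - d)]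
  nlinarith [sq_nonneg c, mul_le_mul_of_nonneg_left this (sq_nonneg c)]

lemma lintegral_integral_regKernel_sq_le (h0 : 0 < α) (h2 : α < 1 / 2) (hfm : Measurable f)
    (hfb : ∀ u, |f u| ≤ B) (hfs : ∀ u, u ∉ Ioc 0 T → f u = 0) :
    ∫⁻ σ in Ioc 0 T, ‖∫ u, regKernel α σ u * f u‖ₑ ^ 2 ≤
      ENNReal.ofReal ((2 + 1 / (1 / 2 - α)) ^ 2 * ∫ u, f u ^ 2) := by
  have hA : 0 ≤ 2 + 1 / (1 / 2 - α) := by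
    have : 0 < 1 / 2 - α := by linarith
    positivity
  rw [ENNReal.ofReal_mul (by positivity), ENNReal.ofReal_pow hA,
    ofReal_integral_eq_lintegral_ofReal (integrable_sq_of_bounded_of_support hfm hfb hfs)
      (ae_of_all _ fun u => sq_nonneg _)]
  simp only [ofReal_sq_eq_enorm_sq]
  refine le_trans ?_ (lintegral_regKernel_sq_le h0 h2 hfm hfs)
  refine (lintegral_mono fun σ => ?_).trans (lintegral_mono_set fun x hx => mem_Ioi.2 hx.1)
  gcongr
  exact enorm_integral_le_lintegral_enorm _

/-- The almost everywhere derivative of the composition, up to its normalising constant. -/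
lemma ae_hasDerivAt_integral_mixedKernel (h0 : 0 < α) (h2 : α < 1 / 2)
    (hfm : Measurable f) (hfb : ∀ u, |f u| ≤ B) (hfs : ∀ u, u ∉ Ioc 0 T → f u = 0) :
    ∀ᵐ t, t ∈ Ioo 0 T → HasDerivAt (fun τ => ∫ u, mixedKernel α τ u * f u)
      (-deriv (fun t => ∫ u, Real.log (t - u) * f u) t + (∫ u, regKernel α t u * f u) +
        kernelJump α * f t) t := by
  rcases le_or_gt T 0 with hT | hT
  · simp [Ioo_eq_empty_of_le hT]
  have hf := integrable_of_bounded_of_support hfm hfb hfs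
  have hp : IntervalIntegrable (fun σ => ∫ u, regKernel α σ u * f u) volume 0 T :=
    (intervalIntegrable_iff_integrableOn_Ioc_of_le hT.le).2
      (integrable_regKernel_mul h0 h2 hfm hfb hfs T).integral_prod_left
  filter_upwards [(log_potential_deriv hfm hfb hfs).1, hp.ae_hasDerivAt_integral,
    LocallyIntegrable.ae_hasDerivAt_integral hf.locallyIntegrable] with t ht1 ht2 ht3 ht
  have hmem : t ∈ uIcc 0 T := by rw [uIcc_of_le hT.le]; exact Ioo_subset_Icc_self ht
  have hd := (((hasDerivAt_const t (∫ u, Real.log u * f u)).sub ht1.hasDerivAt).add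
    (ht2 hmem 0 left_mem_uIcc)).add ((ht3 0).const_mul (kernelJump α))
  rw [zero_sub] at hd
  refine hd.congr_of_eventuallyEq ?_
  filter_upwards [Ioi_mem_nhds ht.1] with τ hτ
  exact integral_mixedKernel_mul_eq h0 h2 hτ hfm hfb hfs

lemma lintegral_deriv_mixedKernel_sq_le (h0 : 0 < α) (h2 : α < 1 / 2) (c : ℝ)
    (hfm : Measurable f) (hfb : ∀ u, |f u| ≤ B) (hfs : ∀ u, u ∉ Ioc 0 T → f u = 0) :
    ∫⁻ t in Ioc 0 T, ‖c * (-deriv (fun t => ∫ u, Real.log (t - u) * f u) t +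
        (∫ u, regKernel α t u * f u) + kernelJump α * f t)‖ₑ ^ 2 ≤
      ENNReal.ofReal (3 * c ^ 2 * (2 * Real.pi ^ 2 + (2 + 1 / (1 / 2 - α)) ^ 2 +
        kernelJump α ^ 2) * ∫ u, f u ^ 2) := by
  have hf2 : 0 ≤ ∫ u, f u ^ 2 := integral_nonneg fun u => sq_nonneg _
  have hJ : ∫⁻ t in Ioc 0 T, ‖kernelJump α * f t‖ₑ ^ 2 ≤
      ENNReal.ofReal (kernelJump α ^ 2 * ∫ u, f u ^ 2) := by
    rw [← integral_const_mul, ofReal_integral_eq_lintegral_ofReal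
      ((integrable_sq_of_bounded_of_support hfm hfb hfs).const_mul _)
      (ae_of_all _ fun u => by positivity)]
    simp only [← mul_pow, ofReal_sq_eq_enorm_sq]
    exact setLIntegral_le_lintegral _ _
  refine (lintegral_mono fun t => enorm_mul_neg_add_add_sq_le _ _ _ _).trans ?_
  rw [lintegral_const_mul' _ _ ENNReal.ofReal_ne_top,
    lintegral_add_right _ ((hfm.const_mul (kernelJump α)).enorm.pow_const 2),
    lintegral_add_left ((measurable_deriv _).enorm.pow_const 2), mul_assoc (3 * c ^ 2),
    ENNReal.ofReal_mul (p := 3 * c ^ 2) (by positivity), add_mul, add_mul,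
    ENNReal.ofReal_add (by positivity) (by positivity),
    ENNReal.ofReal_add (by positivity) (by positivity)]
  gcongr
  · exact (setLIntegral_le_lintegral _ _).trans (log_potential_deriv hfm hfb hfs).2
  · exact lintegral_integral_regKernel_sq_le h0 h2 hfm hfb hfs

end Stability

/-- Stability of the adjoint problem: for `0 < α < 1/2` there is `C > 0` depending only
on `α` such that for every `T > 0` and continuous `e : [0,T] → ℝ`, the right fractional
integral `w(t) = ∫_t^T ω_α(s-t) e(s) ds` satisfies
`∫_0^T ((D_{0+}^α w)(t))² dt ≤ C ∫_0^T e(t)² dt`, the left Riemann–Liouville derivative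
`D_{0+}^α w` existing at almost every `t ∈ (0,T)`. -/
theorem adjoint_problem_stability (α : ℝ) (hα0 : 0 < α) (hα2 : α < 1 / 2) :
    ∃ C : ℝ, 0 < C ∧
      ∀ T : ℝ, 0 < T → ∀ e : ℝ → ℝ, ContinuousOn e (Set.Icc 0 T) →
        ∃ D : ℝ → ℝ,
          (∀ᵐ t ∂MeasureTheory.volume, t ∈ Set.Ioo (0 : ℝ) T →
            HasDerivAt
              (fun τ => ∫ s in (0:ℝ)..τ,
                rlKernel (1 - α) (τ - s) * (∫ u in s..T, rlKernel α (u - s) * e u))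
              (D t) t) ∧
          (∫ t in (0:ℝ)..T, (D t) ^ 2) ≤ C * ∫ t in (0:ℝ)..T, (e t) ^ 2 := by
  set c : ℝ := 1 / (Real.Gamma (1 - α) * Real.Gamma α)
  have hc : 0 < c := one_div_pos.2
    (mul_pos (Real.Gamma_pos_of_pos (by linarith)) (Real.Gamma_pos_of_pos hα0))
  refine ⟨3 * c ^ 2 * (2 * Real.pi ^ 2 + (2 + 1 / (1 / 2 - α)) ^ 2 + kernelJump α ^ 2),
    by positivity, fun T hT e he => ?_⟩
  set f : ℝ → ℝ := (Ioc 0 T).indicator e with hf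
  obtain ⟨B, hB⟩ := isCompact_Icc.exists_bound_of_continuousOn he
  have hB0 : 0 ≤ B := (norm_nonneg _).trans (hB 0 (left_mem_Icc.2 hT.le))
  have hfs : ∀ u, u ∉ Ioc 0 T → f u = 0 := fun u hu => indicator_of_notMem hu _
  have hfe : ∀ u ∈ Ioc 0 T, f u = e u := fun u hu => indicator_of_mem hu _
  have hfb : ∀ u, |f u| ≤ B := fun u => by
    by_cases hu : u ∈ Ioc 0 T
    · rw [hfe u hu]
      exact hB u (Ioc_subset_Icc_self hu)
    · rwa [hfs u hu, abs_zero]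
  have hfm : Measurable f := by
    have := (he.mono Ioc_subset_Icc_self).measurable_piecewise (g := 0)
      continuousOn_const measurableSet_Ioc
    rwa [piecewise_eq_indicator] at this
  have hf2 : ∫ t in (0 : ℝ)..T, e t ^ 2 = ∫ u, f u ^ 2 := by
    rw [intervalIntegral.integral_of_le hT.le, ← integral_indicator measurableSet_Ioc]
    congr 1
    ext u
    by_cases hu : u ∈ Ioc 0 T
    · rw [indicator_of_mem hu, hfe u hu]
    · rw [indicator_of_notMem hu, hfs u hu, zero_pow two_ne_zero]
  refine ⟨fun t => c * (-deriv (fun t => ∫ u, Real.log (t - u) * f u) t +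
    (∫ u, regKernel α t u * f u) + kernelJump α * f t), ?_, ?_⟩
  · filter_upwards [ae_hasDerivAt_integral_mixedKernel hα0 hα2 hfm hfb hfs] with t ht hmem
    refine ((ht hmem).const_mul c).congr_of_eventuallyEq ?_
    filter_upwards [Ioo_mem_nhds hmem.1 hmem.2] with τ hτ
    exact integral_rlKernel_mul_eq hα0 (by linarith) hτ.1 hτ.2 hfm hfb hfs hfe
  · rw [hf2]
    exact intervalIntegral_sq_le_of_lintegral_le hT.le
      (mul_nonneg (by positivity) (integral_nonneg fun u => sq_nonneg _))
      (lintegral_deriv_mixedKernel_sq_le hα0 hα2 c hfm hfb hfs)
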